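/- arXiv:1705.05225 — 3 statements merged into one kernel-verified Lean document; each statement's English description precedes it below -/
import Mathlib

section
/- There exist a constant c > 0 and an integer K such that for every integer k ≥ K, setting n = 2^(2k) + 1, the number T(n) of toroidal n-queens configurations satisfies T(n) ≥ n^(c·n). -/
/-!
Let `n` be odd and let `i ∈ ZMod n` satisfy `i ^ 2 = -1` (for `n = 2 ^ (2 * k) + 1` take
`i = 2 ^ k`). The linear map `x ↦ i * x` is a toroidal queens configuration, and it admits many
local modifications. Call `{c + e, c + i * e, c - e, c - i * e}` a *square*. Replacing `i * x` by
`i * (2 * c - x)` on a square, i.e. exchanging opposite vertices before multiplying by `i`,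
preserves the occupied columns, rows and diagonals, because
`x ± i * (2 * c - x) = (1 ± i) * (c ∓ i * (x - c))` and the quarter turns `x ↦ c ∓ i * (x - c)`
permute the square. Modifications on disjoint squares are independent.

Disjoint squares are chosen greedily inside a set `U` of untouched points. Fix `x₀ ∈ U`. The
squares having `x₀` and `x₀ + 2 * d` as opposite vertices are parametrised by `d`, and all but
`3 * (n - |U|)` values of `d` give a square inside `U`. The resulting permutation sends `x₀` to
`x₀ + 2 * d`, so different choices of `d` lead to different configurations. After `s` steps this
gives `q ^ s ≤ T n` as soon as `q + 12 * s ≤ n + 12` (`pow_le_card_localPerms`), and `q ≈ n / 2`,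
`s ≈ n / 24` yields the theorem.
-/

/-- A toroidal `n`-queens configuration: a permutation `σ` of `ZMod n` such that
`x ↦ x + σ x` and `x ↦ x - σ x` are also permutations of `ZMod n`. -/
def IsToroidalQueens (n : ℕ) (σ : Equiv.Perm (ZMod n)) : Prop :=
  Function.Bijective (fun x : ZMod n => x + σ x) ∧
  Function.Bijective (fun x : ZMod n => x - σ x)

/-- `T n` is the number of toroidal `n`-queens configurations. -/
noncomputable def T (n : ℕ) : ℕ :=
  Nat.card {σ : Equiv.Perm (ZMod n) // IsToroidalQueens n σ}

lemma card_filter_notMem_le {α : Type*} [Fintype α] [DecidableEq α] (U : Finset α)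
    {f : α → α} (hf : Function.Injective f) :
    (Finset.univ.filter (fun d => f d ∉ U)).card + U.card ≤ Fintype.card α := by
  have h : (Finset.univ.filter (fun d => f d ∉ U)).card ≤ (Uᶜ).card :=
    Finset.card_le_card_of_injOn f (fun d hd => by simpa using hd) hf.injOn
  have := Finset.card_compl_add_card U
  omega

section Squares

variable {R : Type*} [CommRing R]

lemma isUnit_one_add {i : R} (hi : i * i = -1) (h2 : IsUnit (2 : R)) : IsUnit (1 + i) :=
  isUnit_of_mul_isUnit_left (y := 1 - i) (by convert h2 using 1; linear_combination -hi)

lemma isUnit_one_sub {i : R} (hi : i * i = -1) (h2 : IsUnit (2 : R)) : IsUnit (1 - i) :=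
  isUnit_of_mul_isUnit_left (y := 1 + i) (by convert h2 using 1; linear_combination -hi)

lemma bijective_mul_of_isUnit {a : R} (ha : IsUnit a) : Function.Bijective (fun x : R => a * x) :=
  ha.unit.mulLeft_bijective

variable [DecidableEq R]

/-- The square with centre `c` and half-diagonal `e`, where multiplication by `i` plays the role of
a quarter turn. It is the single point `c` when `e = 0`. -/
def square (i c e : R) : Finset R := {c + e, c + i * e, c - e, c - i * e}

lemma mem_square {i c e x : R} :
    x ∈ square i c e ↔ x = c + e ∨ x = c + i * e ∨ x = c - e ∨ x = c - i * e := by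
  simp [square]

lemma card_square_le (i c e : R) : (square i c e).card ≤ 4 := Finset.card_le_four

lemma turn_mem {i c e x : R} (hi : i * i = -1) (hx : x ∈ square i c e) :
    c + i * (x - c) ∈ square i c e := by
  rw [mem_square] at hx ⊢
  rcases hx with rfl | rfl | rfl | rfl
  · right; left; ring
  · right; right; left; linear_combination e * hi
  · right; right; right; ring
  · left; linear_combination (-e) * hi

lemma turn_symm_mem {i c e x : R} (hi : i * i = -1) (hx : x ∈ square i c e) :
    c - i * (x - c) ∈ square i c e := by
  rw [mem_square] at hx ⊢
  rcases hx with rfl | rfl | rfl | rfl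
  · right; right; right; ring
  · left; linear_combination (-e) * hi
  · right; left; ring
  · right; right; left; linear_combination e * hi

/-- The permutation that turns the square by a quarter and fixes every other point. -/
def turn (i c e : R) (hi : i * i = -1) : Equiv.Perm R where
  toFun x := if x ∈ square i c e then c + i * (x - c) else x
  invFun x := if x ∈ square i c e then c - i * (x - c) else x
  left_inv x := by
    by_cases hx : x ∈ square i c e
    · simp only [hx, if_true, turn_mem hi hx]
      linear_combination (c - x) * hi
    · simp [hx]
  right_inv x := by
    by_cases hx : x ∈ square i c e
    · simp only [hx, if_true, turn_symm_mem hi hx]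
      linear_combination (c - x) * hi
    · simp [hx]

variable {i c e x : R}

lemma turn_of_mem (hi : i * i = -1) (hx : x ∈ square i c e) :
    turn i c e hi x = c + i * (x - c) := if_pos hx

lemma turn_of_notMem (hi : i * i = -1) (hx : x ∉ square i c e) :
    turn i c e hi x = x := if_neg hx

lemma turn_symm_of_mem (hi : i * i = -1) (hx : x ∈ square i c e) :
    (turn i c e hi).symm x = c - i * (x - c) := if_pos hx

lemma turn_symm_of_notMem (hi : i * i = -1) (hx : x ∉ square i c e) :
    (turn i c e hi).symm x = x := if_neg hx

lemma turn_turn_of_mem (hi : i * i = -1) (hx : x ∈ square i c e) :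
    turn i c e hi (turn i c e hi x) = 2 * c - x := by
  rw [turn_of_mem hi hx, turn_of_mem hi (turn_mem hi hx)]
  linear_combination (x - c) * hi

/-- The permutations `π` that move only points of `U` and for which `x ↦ i * π x` satisfies both
diagonal conditions. -/
def localPerms (i : R) (U : Finset R) : Set (Equiv.Perm R) :=
  {π | (∀ x, x ∉ U → π x = x) ∧ Function.Bijective (fun x => x + i * π x) ∧
    Function.Bijective (fun x => x - i * π x)}

lemma one_mem_localPerms (hi : i * i = -1) (h2 : IsUnit (2 : R)) (U : Finset R) :
    (1 : Equiv.Perm R) ∈ localPerms i U := by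
  refine ⟨fun _ _ => rfl, ?_, ?_⟩
  · convert bijective_mul_of_isUnit (isUnit_one_add hi h2) using 2 with x
    simp only [Equiv.Perm.one_apply]; ring
  · convert bijective_mul_of_isUnit (isUnit_one_sub hi h2) using 2 with x
    simp only [Equiv.Perm.one_apply]; ring

/-- Exchanging opposite vertices of a square disjoint from the points already moved keeps both
diagonal conditions: each diagonal map is precomposed with a quarter turn of the square. -/
lemma mul_turn_sq_mem {U : Finset R} (hi : i * i = -1) (hS : square i c e ⊆ U)
    {π : Equiv.Perm R} (hπ : π ∈ localPerms i (U \ square i c e)) :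
    π * turn i c e hi ^ 2 ∈ localPerms i U := by
  obtain ⟨h0, h1, h2⟩ := hπ
  have hfix : ∀ x ∈ square i c e, π x = x := fun x hx => h0 x (by simp [hx])
  have happ : ∀ x, (π * turn i c e hi ^ 2) x = π (turn i c e hi (turn i c e hi x)) := by
    intro x; simp [pow_two]
  have hin : ∀ x ∈ square i c e, (π * turn i c e hi ^ 2) x = 2 * c - x := by
    intro x hx
    have h := turn_mem hi (turn_mem hi hx)
    rw [happ, hfix _ (by rwa [turn_of_mem hi hx, turn_of_mem hi (turn_mem hi hx)]),
      turn_turn_of_mem hi hx]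
  have hout : ∀ x, x ∉ square i c e → (π * turn i c e hi ^ 2) x = π x := by
    intro x hx
    rw [happ, turn_of_notMem hi hx, turn_of_notMem hi hx]
  refine ⟨fun x hx => ?_, ?_, ?_⟩
  · rw [hout x (fun h => hx (hS h))]
    exact h0 x (by simp [hx])
  · convert h1.comp (turn i c e hi).symm.bijective using 2 with x
    by_cases hx : x ∈ square i c e
    · simp only [Function.comp]
      rw [hin x hx, turn_symm_of_mem hi hx, hfix _ (turn_symm_mem hi hx)]
      linear_combination (x - c) * hi
    · simp only [Function.comp]
      rw [hout x hx, turn_symm_of_notMem hi hx]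
  · convert h2.comp (turn i c e hi).bijective using 2 with x
    by_cases hx : x ∈ square i c e
    · simp only [Function.comp]
      rw [hin x hx, turn_of_mem hi hx, hfix _ (turn_mem hi hx)]
      linear_combination (x - c) * hi
    · simp only [Function.comp]
      rw [hout x hx, turn_of_notMem hi hx]

variable [Fintype R]

/-- All but `3 * (|R| - |U|)` of the squares with a prescribed vertex `x₀ ∈ U` lie in `U`. -/
lemma card_good_squares (hi : i * i = -1) (h2 : IsUnit (2 : R)) {U : Finset R} {x₀ : R}
    (hx₀ : x₀ ∈ U) :
    3 * U.card ≤ (Finset.univ.filter (fun d => square i (x₀ + d) d ⊆ U)).card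
      + 2 * Fintype.card R := by
  have inj : ∀ a : R, IsUnit a → Function.Injective (fun d => x₀ + a * d) := fun a ha =>
    (add_right_injective x₀).comp (bijective_mul_of_isUnit ha).1
  have b1 := card_filter_notMem_le U (inj 2 h2)
  have b2 := card_filter_notMem_le U (inj _ (isUnit_one_add hi h2))
  have b3 := card_filter_notMem_le U (inj _ (isUnit_one_sub hi h2))
  have hcov : (Finset.univ : Finset R) ⊆
      (Finset.univ.filter (fun d => square i (x₀ + d) d ⊆ U)) ∪
      ((Finset.univ.filter (fun d => x₀ + 2 * d ∉ U)) ∪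
      ((Finset.univ.filter (fun d => x₀ + (1 + i) * d ∉ U)) ∪
      (Finset.univ.filter (fun d => x₀ + (1 - i) * d ∉ U)))) := by
    intro d _
    simp only [Finset.mem_union, Finset.mem_filter, Finset.mem_univ, true_and]
    by_contra! h
    obtain ⟨h, h3, h4, h5⟩ := h
    refine h fun y hy => ?_
    rcases mem_square.1 hy with rfl | rfl | rfl | rfl
    · convert h3 using 1; ring
    · convert h4 using 1; ring
    · simpa using hx₀
    · convert h5 using 1; ring
  have h := Finset.card_le_card hcov
  rw [Finset.card_univ] at h
  have u1 := Finset.card_union_le (Finset.univ.filter (fun d => square i (x₀ + d) d ⊆ U))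
      ((Finset.univ.filter (fun d => x₀ + 2 * d ∉ U)) ∪
      ((Finset.univ.filter (fun d => x₀ + (1 + i) * d ∉ U)) ∪
      (Finset.univ.filter (fun d => x₀ + (1 - i) * d ∉ U))))
  have u2 := Finset.card_union_le (Finset.univ.filter (fun d => x₀ + 2 * d ∉ U))
      ((Finset.univ.filter (fun d => x₀ + (1 + i) * d ∉ U)) ∪
      (Finset.univ.filter (fun d => x₀ + (1 - i) * d ∉ U)))
  have u3 := Finset.card_union_le (Finset.univ.filter (fun d => x₀ + (1 + i) * d ∉ U))
      (Finset.univ.filter (fun d => x₀ + (1 - i) * d ∉ U))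
  omega

/-- Greedy count: while `U` is large, at least `q` squares through a fixed point of `U` are
available, and using one of them shrinks `U` by at most four points. -/
lemma pow_le_card_localPerms (hi : i * i = -1) (h2 : IsUnit (2 : R)) {q : ℕ} (hq : 0 < q) (s : ℕ) :
    ∀ U : Finset R, 2 * Fintype.card R + q + 12 * s ≤ 3 * U.card + 12 →
      q ^ s ≤ Nat.card (localPerms i U) := by
  induction s with
  | zero =>
    intro U _
    have : Nonempty (localPerms i U) := ⟨⟨1, one_mem_localPerms hi h2 U⟩⟩
    rw [pow_zero]
    exact Nat.card_pos
  | succ s ih =>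
    intro U hU
    have hne : U.Nonempty := by
      rw [← Finset.card_pos]; omega
    obtain ⟨x₀, hx₀⟩ := hne
    set D := {d : R // square i (x₀ + d) d ⊆ U} with hD
    have hgood : q ≤ Nat.card D := by
      have := card_good_squares hi h2 hx₀
      rw [Nat.card_eq_fintype_card, Fintype.card_subtype]
      omega
    have hstep : ∀ d : D, q ^ s ≤
        Nat.card (localPerms i (U \ square i (x₀ + d.1) d.1)) := by
      intro d
      apply ih
      have h4 := card_square_le i (x₀ + d.1) d.1
      have := Finset.le_card_sdiff (square i (x₀ + d.1) d.1) U
      omega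
    let F : (Σ d : D, localPerms i (U \ square i (x₀ + d.1) d.1)) → localPerms i U :=
      fun p => ⟨p.2.1 * turn i (x₀ + p.1.1) p.1.1 hi ^ 2, mul_turn_sq_mem hi p.1.2 p.2.2⟩
    -- The new permutation sends `x₀` to the opposite vertex, hence determines the square.
    have hval : ∀ p, (F p).1 x₀ = x₀ + 2 * p.1.1 := by
      rintro ⟨⟨d, hd⟩, ⟨π, hπ⟩⟩
      have hx : x₀ ∈ square i (x₀ + d) d := mem_square.2 (by simp)
      have ho : 2 * (x₀ + d) - x₀ ∈ square i (x₀ + d) d :=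
        mem_square.2 (Or.inl (by ring))
      have : (π * turn i (x₀ + d) d hi ^ 2) x₀ = π (2 * (x₀ + d) - x₀) := by
        rw [← turn_turn_of_mem hi hx]; simp [pow_two]
      change (π * turn i (x₀ + d) d hi ^ 2) x₀ = x₀ + 2 * d
      rw [this, hπ.1 _ (by simp [ho])]
      ring
    have hF : Function.Injective F := by
      rintro ⟨⟨d, hd⟩, ⟨π, hπ⟩⟩ ⟨⟨d', hd'⟩, ⟨π', hπ'⟩⟩ h
      have h1 : x₀ + 2 * d = x₀ + 2 * d' := by
        rw [← hval ⟨⟨d, hd⟩, ⟨π, hπ⟩⟩, ← hval ⟨⟨d', hd'⟩, ⟨π', hπ'⟩⟩, h]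
      obtain rfl : d = d' := (bijective_mul_of_isUnit h2).1 (add_left_cancel h1)
      have h3 : π * turn i (x₀ + d) d hi ^ 2 = π' * turn i (x₀ + d) d hi ^ 2 :=
        congrArg Subtype.val h
      obtain rfl := mul_right_cancel h3
      rfl
    calc q ^ (s + 1) = q * q ^ s := by ring
      _ ≤ Nat.card D * q ^ s := by gcongr
      _ = ∑ _d : D, q ^ s := by simp [Nat.card_eq_fintype_card]
      _ ≤ ∑ d : D, Nat.card (localPerms i (U \ square i (x₀ + d.1) d.1)) :=
        Finset.sum_le_sum fun d _ => hstep d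
      _ = Nat.card (Σ d : D, localPerms i (U \ square i (x₀ + d.1) d.1)) := Nat.card_sigma.symm
      _ ≤ Nat.card (localPerms i U) := Nat.card_le_card_of_injective F hF

end Squares

lemma pow_le_T {n : ℕ} [NeZero n] {i : ZMod n} (hi : i * i = -1) (h2 : IsUnit (2 : ZMod n))
    {q s : ℕ} (hq : 0 < q) (h : q + 12 * s ≤ n + 12) : q ^ s ≤ T n := by
  refine (pow_le_card_localPerms hi h2 hq s Finset.univ
    (by rw [Finset.card_univ, ZMod.card]; omega)).trans ?_
  have hu : IsUnit i := isUnit_of_mul_isUnit_left (y := i) (hi ▸ isUnit_one.neg)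
  let M : Equiv.Perm (ZMod n) := Equiv.ofBijective _ (bijective_mul_of_isUnit hu)
  refine Nat.card_le_card_of_injective
    (fun π : localPerms i (Finset.univ : Finset (ZMod n)) =>
      (⟨M * π.1, π.2.2.1, π.2.2.2⟩ : {σ : Equiv.Perm (ZMod n) // IsToroidalQueens n σ})) ?_
  intro π π' h
  exact Subtype.ext (mul_left_cancel (congrArg Subtype.val h))

/-- With `q = ⌊n / 2⌋ ≥ n ^ (1 / 2)` and `s = ⌊n / 24⌋ ≥ n / 48`. -/
lemma rpow_le_half_pow {n : ℕ} (hn : 24 ≤ n) :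
    (n : ℝ) ^ ((1 / 96 : ℝ) * n) ≤ (((n / 2) ^ (n / 24) : ℕ) : ℝ) := by
  have hq : n ≤ (n / 2) ^ 2 := by
    have h1 : n ≤ 2 * (n / 2) + 1 := by omega
    have h2 : 12 ≤ n / 2 := by omega
    nlinarith
  have hs : (n : ℝ) / 48 ≤ ((n / 24 : ℕ) : ℝ) := by
    have : n ≤ 48 * (n / 24) := by omega
    have : (n : ℝ) ≤ 48 * ((n / 24 : ℕ) : ℝ) := by exact_mod_cast this
    linarith
  have h1 : (1 : ℝ) ≤ ((n / 2 : ℕ) : ℝ) := by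
    have : 1 ≤ n / 2 := by omega
    exact_mod_cast this
  calc (n : ℝ) ^ ((1 / 96 : ℝ) * n)
      ≤ (((n / 2 : ℕ) : ℝ) ^ (2 : ℕ)) ^ ((1 / 96 : ℝ) * n) := by
        apply Real.rpow_le_rpow (by positivity) (by exact_mod_cast hq) (by positivity)
    _ = ((n / 2 : ℕ) : ℝ) ^ ((n : ℝ) / 48) := by
        rw [← Real.rpow_natCast, ← Real.rpow_mul (by positivity)]
        congr 1; push_cast; ring
    _ ≤ ((n / 2 : ℕ) : ℝ) ^ ((n / 24 : ℕ) : ℝ) := Real.rpow_le_rpow_of_exponent_le h1 hs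
    _ = (((n / 2) ^ (n / 24) : ℕ) : ℝ) := by rw [Real.rpow_natCast]; push_cast; rfl

theorem toroidal_queens_lower_bound :
    ∃ c : ℝ, 0 < c ∧ ∃ K : ℕ, ∀ k : ℕ, K ≤ k →
      ((2 ^ (2 * k) + 1 : ℝ)) ^ (c * (2 ^ (2 * k) + 1 : ℝ)) ≤
        (T (2 ^ (2 * k) + 1) : ℝ) := by
  refine ⟨1 / 96, by norm_num, 3, fun k hk => ?_⟩
  have hbig : 2 ^ 6 ≤ 2 ^ (2 * k) := Nat.pow_le_pow_right (by norm_num) (by omega)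
  have hodd : Odd (2 ^ (2 * k) + 1) :=
    (Nat.even_pow.2 ⟨even_two, by omega⟩).add_one
  have hcast : ((2 ^ (2 * k) + 1 : ℕ) : ℝ) = 2 ^ (2 * k) + 1 := by push_cast; rfl
  have hi : (2 ^ k : ZMod (2 ^ (2 * k) + 1)) * 2 ^ k = -1 := by
    have h := ZMod.natCast_self (2 ^ (2 * k) + 1)
    push_cast at h
    rw [eq_neg_iff_add_eq_zero, ← h, ← pow_add, two_mul]
  have h2 : IsUnit (2 : ZMod (2 ^ (2 * k) + 1)) := by
    have := (ZMod.isUnit_iff_coprime 2 (2 ^ (2 * k) + 1)).2 (Nat.coprime_two_left.2 hodd)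
    exact_mod_cast this
  rw [← hcast]
  refine (rpow_le_half_pow (by omega)).trans ?_
  exact_mod_cast pow_le_T hi h2 (by omega) (by omega)
end

section
/- For every ε > 0 there exists N such that for every integer n ≥ N, the number T(n) of toroidal n-queens configurations satisfies T(n) ≤ ((1 + ε) · n / e^3)^n. -/
/-! ### The chain rule for sequential revealing -/

open Finset in
/-- Kraft inequality for sequential revealing. Points are revealed in the order of `t`, and `A x σ`
is the set of values that are still possible at `x`, which may depend only on what `σ` does at
strictly earlier points. Choosing the value at each `x` uniformly from `A x σ` produces a given
`σ ∈ S` with probability `∏ x, 1 / #(A x σ)`, and these probabilities add up to at most one. The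
functions in the sum are those for which all values off `U` have already been revealed, as `ρ`. -/
theorem kraft {α β : Type*} [Fintype α] [DecidableEq α] [DecidableEq β] {m : ℕ}
    (t : α → Fin m) (A : α → (α → β) → Finset β)
    (hA : ∀ x σ τ, (∀ z, t z < t x → σ z = τ z) → A x σ = A x τ)
    (S : Finset (α → β)) (hS : ∀ σ ∈ S, ∀ x, σ x ∈ A x σ) (U : Finset α) (ρ : α → β) :
    ∑ σ ∈ S with ∀ z, z ∉ U → σ z = ρ z, ∏ x ∈ U, (1 / (#(A x σ) : ℝ)) ≤ 1 := by
  induction U using Finset.induction_on_min_value t generalizing ρ with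
  | empty =>
    simp only [prod_empty, sum_const, nsmul_eq_mul, mul_one]
    have : #{σ ∈ S | ∀ z, z ∉ (∅ : Finset α) → σ z = ρ z} ≤ 1 := by
      rw [card_le_one]
      intro a ha b hb
      simp only [mem_filter, notMem_empty, not_false_eq_true, forall_const] at ha hb
      funext z
      rw [ha.2 z, hb.2 z]
    exact_mod_cast this
  | insert a s ha hmin ih =>
    -- the minimality of `t a` makes the possible values at `a` a function of `ρ` alone
    have hAa : ∀ σ ∈ S.filter (fun σ => ∀ z, z ∉ insert a s → σ z = ρ z), A a σ = A a ρ := by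
      intro σ hσ
      refine hA a σ ρ fun z hz => (mem_filter.1 hσ).2 z ?_
      intro hz'
      rcases mem_insert.1 hz' with rfl | h
      · exact lt_irrefl _ hz
      · exact absurd hz (not_lt.2 (hmin z h))
    have hmaps : ∀ σ ∈ S.filter (fun σ => ∀ z, z ∉ insert a s → σ z = ρ z),
        σ a ∈ A a ρ := by
      intro σ hσ
      rw [← hAa σ hσ]
      exact hS σ (mem_filter.1 hσ).1 a
    rw [← sum_fiberwise_of_maps_to hmaps]
    have hb : ∀ b ∈ A a ρ, ∑ σ ∈ (S.filter (fun σ => ∀ z, z ∉ insert a s → σ z = ρ z)) with σ a = b,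
        ∏ x ∈ insert a s, (1 / (#(A x σ) : ℝ)) ≤ 1 / (#(A a ρ) : ℝ) := by
      intro b _
      have hset : ((S.filter (fun σ => ∀ z, z ∉ insert a s → σ z = ρ z)).filter
          (fun σ => σ a = b)) =
          S.filter (fun σ => ∀ z, z ∉ s → σ z = Function.update ρ a b z) := by
        ext σ
        simp only [mem_filter, mem_insert, not_or, and_assoc]
        refine and_congr_right fun _ => ⟨?_, ?_⟩
        · rintro ⟨h1, h2⟩ z hz
          by_cases h : z = a
          · subst h; simpa using h2
          · rw [Function.update_of_ne h]; exact h1 z ⟨h, hz⟩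
        · intro h
          refine ⟨fun z hz => ?_, by simpa using h a ha⟩
          rw [h z hz.2, Function.update_of_ne hz.1]
      calc _ = ∑ σ ∈ (S.filter (fun σ => ∀ z, z ∉ insert a s → σ z = ρ z)) with σ a = b,
            (1 / (#(A a ρ) : ℝ)) * ∏ x ∈ s, (1 / (#(A x σ) : ℝ)) := by
            refine sum_congr rfl fun σ hσ => ?_
            rw [prod_insert ha, hAa σ (mem_filter.1 hσ).1]
        _ = (1 / (#(A a ρ) : ℝ)) * ∑ σ ∈ S with ∀ z, z ∉ s → σ z = Function.update ρ a b z,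
            ∏ x ∈ s, (1 / (#(A x σ) : ℝ)) := by rw [← mul_sum, hset]
        _ ≤ (1 / (#(A a ρ) : ℝ)) * 1 := by gcongr; exact ih _
        _ = _ := mul_one _
    refine (sum_le_sum hb).trans ?_
    rw [sum_const, nsmul_eq_mul, mul_one_div]
    exact div_self_le_one _

open Finset in
/-- The logarithmic form of `kraft`, which is the chain rule for the entropy of a uniformly random
element of `S`. -/
theorem card_mul_log_card_le {α β : Type*} [Fintype α] [DecidableEq α] [DecidableEq β] {m : ℕ}
    (t : α → Fin m) (A : α → (α → β) → Finset β)
    (hA : ∀ x σ τ, (∀ z, t z < t x → σ z = τ z) → A x σ = A x τ)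
    (S : Finset (α → β)) (hS : ∀ σ ∈ S, ∀ x, σ x ∈ A x σ) :
    (#S : ℝ) * Real.log #S ≤ ∑ σ ∈ S, ∑ x, Real.log #(A x σ) := by
  rcases S.eq_empty_or_nonempty with rfl | ⟨ρ, hρ⟩
  · simp
  have hk := kraft t A hA S hS univ ρ
  simp only [mem_univ, not_true_eq_false, false_imp_iff, implies_true, filter_true] at hk
  have hc : (0 : ℝ) < #S := by exact_mod_cast card_pos.2 ⟨ρ, hρ⟩
  -- concavity of `log` enters as `1 + u ≤ exp u`, summed over `S` and compared with `kraft`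
  have key : ∀ σ ∈ S, 1 + (Real.log #S - ∑ x, Real.log #(A x σ)) ≤
      #S * ∏ x, (1 / (#(A x σ) : ℝ)) := by
    intro σ hσ
    have hpos : ∀ x, (0 : ℝ) < #(A x σ) := fun x => by
      exact_mod_cast card_pos.2 ⟨_, hS σ hσ x⟩
    have := Real.add_one_le_exp (Real.log #S - ∑ x, Real.log #(A x σ))
    rw [Real.exp_sub, Real.exp_log hc, Real.exp_sum] at this
    simp only [Real.exp_log (hpos _)] at this
    rw [add_comm, prod_div_distrib, prod_const_one, mul_one_div]
    exact this
  have h := sum_le_sum key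
  rw [← mul_sum, sum_add_distrib, sum_sub_distrib] at h
  simp only [sum_const, nsmul_eq_mul, mul_one] at h
  nlinarith

/-! ### Random reveal times and unattacked squares -/

open Finset in
/-- The probability that independent uniform reveal times `t` satisfy `t x = j` and `j ≤ t z` for
all `z ∈ Z`. -/
theorem card_times {α : Type*} [Fintype α] [DecidableEq α] {m : ℕ} (hm : 0 < m) (x : α)
    (Z : Finset α) (hx : x ∉ Z) (j : Fin m) :
    (#{t : α → Fin m | t x = j ∧ ∀ z ∈ Z, j ≤ t z} : ℝ) =
      (m : ℝ) ^ Fintype.card α * (1 / m * (((m - j : ℕ) : ℝ) / m) ^ #Z) := by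
  have hm' : (m : ℝ) ≠ 0 := by positivity
  have hset : ({t : α → Fin m | t x = j ∧ ∀ z ∈ Z, j ≤ t z} : Finset (α → Fin m)) =
      Fintype.piFinset (fun z => if z = x then {j} else if z ∈ Z then Ici j else univ) := by
    ext t
    simp only [mem_filter, mem_univ, true_and, Fintype.mem_piFinset]
    constructor
    · rintro ⟨h1, h2⟩ z
      split_ifs with h h'
      · subst h; simpa using h1
      · simpa using h2 z h'
      · simp
    · intro h
      refine ⟨by simpa using h x, fun z hz => ?_⟩
      have hne : z ≠ x := by rintro rfl; exact hx hz
      simpa [hne, hz] using h z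
  rw [hset, Fintype.card_piFinset]
  push_cast
  have h1 : ∀ z : α, ((#(if z = x then {j} else if z ∈ Z then Ici j else univ : Finset (Fin m)) : ℕ) : ℝ)
      = m * ((if z = x then 1 / (m : ℝ) else 1) *
        (if z ∈ Z then ((m - j : ℕ) : ℝ) / m else 1)) := by
    intro z
    split_ifs with h h' h'
    · subst h; exact absurd h' hx
    · simp [hm']
    · simp only [Fin.card_Ici]; field_simp
    · simp
  rw [prod_congr rfl fun z _ => h1 z, prod_mul_distrib, prod_mul_distrib, prod_const, card_univ]
  rw [prod_ite_eq' univ x, if_pos (mem_univ x), prod_ite_mem, univ_inter, prod_const]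

/-- The functions `ZMod n → ZMod n` underlying the toroidal `n`-queens configurations. -/
noncomputable def queenFuns (n : ℕ) [NeZero n] : Finset (ZMod n → ZMod n) := by
  classical
  exact Finset.univ.filter fun f => Function.Bijective f ∧
    Function.Bijective (fun x => x + f x) ∧ Function.Bijective (fun x => x - f x)

theorem mem_queenFuns {n : ℕ} [NeZero n] {f : ZMod n → ZMod n} :
    f ∈ queenFuns n ↔ Function.Bijective f ∧
    Function.Bijective (fun x => x + f x) ∧ Function.Bijective (fun x => x - f x) := by
  simp [queenFuns]

theorem T_le_card (n : ℕ) [NeZero n] : T n ≤ (queenFuns n).card := by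
  rw [T, ← Nat.card_eq_finsetCard]
  refine Nat.card_le_card_of_injective
    (fun σ => ⟨σ.1, mem_queenFuns.2 ⟨σ.1.bijective, σ.2.1, σ.2.2⟩⟩) ?_
  intro σ τ h
  exact Subtype.ext (DFunLike.coe_injective (congrArg Subtype.val h))

/-- The squares of column `x` not attacked by the queens of `f` revealed before time `t x`. -/
def avail {n m : ℕ} [NeZero n] (t : ZMod n → Fin m) (x : ZMod n) (f : ZMod n → ZMod n) :
    Finset (ZMod n) :=
  Finset.univ.filter fun y => ∀ z, t z < t x → y ≠ f z ∧ x + y ≠ z + f z ∧ x - y ≠ z - f z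

theorem mem_avail_self {n m : ℕ} [NeZero n] (t : ZMod n → Fin m) (x : ZMod n)
    (f : ZMod n → ZMod n) (hf : f ∈ queenFuns n) : f x ∈ avail t x f := by
  obtain ⟨h1, h2, h3⟩ := mem_queenFuns.1 hf
  simp only [avail, Finset.mem_filter, Finset.mem_univ, true_and]
  intro z hz
  have hne : x ≠ z := by rintro rfl; exact lt_irrefl _ hz
  exact ⟨fun h => hne (h1.1 h), fun h => hne (h2.1 h), fun h => hne (h3.1 h)⟩

open Finset in
/-- Three distinct queens attack `(x, y)`, so it survives until time `j` with probability
`((m - j) / m) ^ 3`. -/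
theorem card_avail_ne {n m : ℕ} [NeZero n] (hm : 0 < m)
    (h2 : ∀ a b : ZMod n, a + a = b + b → a = b) (f : ZMod n → ZMod n) (hf : f ∈ queenFuns n)
    (x y : ZMod n) (hy : y ≠ f x) (j : Fin m) :
    (#{t : ZMod n → Fin m | t x = j ∧ y ∈ avail t x f} : ℝ) ≤
      (m : ℝ) ^ n * (1 / m * (((m - j : ℕ) : ℝ) / m) ^ 3) := by
  obtain ⟨hb1, hb2, hb3⟩ := mem_queenFuns.1 hf
  obtain ⟨z₁, hz₁⟩ := hb1.2 y
  obtain ⟨z₂, hz₂⟩ := hb2.2 (x + y)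
  obtain ⟨z₃, hz₃⟩ := hb3.2 (x - y)
  simp only at hz₂ hz₃
  have hx1 : x ≠ z₁ := by rintro rfl; exact hy hz₁.symm
  have hx2 : x ≠ z₂ := by rintro rfl; exact hy (add_left_cancel hz₂).symm
  have hx3 : x ≠ z₃ := by rintro rfl; exact hy (sub_right_injective hz₃).symm
  have h12 : z₁ ≠ z₂ := by
    rintro rfl; rw [hz₁] at hz₂; exact hx1 (add_right_cancel hz₂).symm
  have h13 : z₁ ≠ z₃ := by
    rintro rfl; rw [hz₁] at hz₃; exact hx1 (sub_left_injective hz₃).symm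
  have h23 : z₂ ≠ z₃ := by
    rintro rfl
    refine hx2 (h2 _ _ ?_).symm
    linear_combination hz₂ + hz₃
  have hZ : #({z₁, z₂, z₃} : Finset (ZMod n)) = 3 := card_eq_three.2 ⟨_, _, _, h12, h13, h23, rfl⟩
  have := card_times hm x {z₁, z₂, z₃} (by simp [hx1, hx2, hx3]) j
  rw [hZ, ZMod.card] at this
  rw [← this]
  norm_cast
  refine card_le_card fun t ht => ?_
  simp only [avail, mem_filter, mem_univ, true_and] at ht ⊢
  obtain ⟨rfl, ht⟩ := ht
  refine ⟨rfl, fun z hz => not_lt.1 fun hlt => ?_⟩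
  obtain ⟨k1, k2, k3⟩ := ht z hlt
  simp only [mem_insert, mem_singleton] at hz
  rcases hz with rfl | rfl | rfl
  · exact k1 hz₁.symm
  · exact k2 hz₂.symm
  · exact k3 hz₃.symm

open Finset in
theorem sum_card_avail_le {n m : ℕ} [NeZero n] (hm : 0 < m)
    (h2 : ∀ a b : ZMod n, a + a = b + b → a = b) (f : ZMod n → ZMod n) (hf : f ∈ queenFuns n)
    (x : ZMod n) (j : Fin m) :
    ∑ t : ZMod n → Fin m with t x = j, (#(avail t x f) : ℝ) ≤
      (m : ℝ) ^ n * (1 / m) * (1 + n * (((m - j : ℕ) : ℝ) / m) ^ 3) := by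
  have hswap : ∑ t : ZMod n → Fin m with t x = j, (#(avail t x f) : ℝ) =
      ∑ y : ZMod n, (#{t : ZMod n → Fin m | t x = j ∧ y ∈ avail t x f} : ℝ) := by
    have : ∀ t : ZMod n → Fin m, (#(avail t x f) : ℝ) = ∑ y, if y ∈ avail t x f then 1 else 0 := by
      intro t; simp
    rw [sum_congr rfl fun t _ => this t, sum_comm]
    refine sum_congr rfl fun y _ => ?_
    rw [← sum_filter, filter_filter]; simp
  rw [hswap, ← add_sum_erase _ _ (mem_univ (f x))]
  have h0 : (#{t : ZMod n → Fin m | t x = j ∧ f x ∈ avail t x f} : ℝ) ≤ (m : ℝ) ^ n * (1 / m) := by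
    have := card_times hm x ∅ (by simp) j
    rw [ZMod.card] at this
    simp only [card_empty, pow_zero, mul_one] at this
    rw [← this]
    norm_cast
    exact card_le_card fun t ht => by simpa using (mem_filter.1 ht).2.1
  have h1 := sum_le_sum fun y (hy : y ∈ univ.erase (f x)) =>
    card_avail_ne hm h2 f hf x y (ne_of_mem_erase hy) j
  rw [sum_const, nsmul_eq_mul, card_erase_of_mem (mem_univ _), card_univ, ZMod.card] at h1
  have h3 : ((n - 1 : ℕ) : ℝ) ≤ n := by exact_mod_cast Nat.sub_le _ _
  have h4 : (0 : ℝ) ≤ (m : ℝ) ^ n * (1 / m * (((m - j : ℕ) : ℝ) / m) ^ 3) := by positivity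
  nlinarith [mul_le_mul_of_nonneg_right h3 h4]

open Finset in
/-- The expected logarithm of the number of available squares in a column, over uniform reveal
times; the passage to the logarithm of the expectation is Jensen's inequality. -/
theorem sum_log_avail_le {n m : ℕ} [NeZero n] (hm : 0 < m)
    (h2 : ∀ a b : ZMod n, a + a = b + b → a = b) (f : ZMod n → ZMod n) (hf : f ∈ queenFuns n)
    (x : ZMod n) :
    ∑ t : ZMod n → Fin m, Real.log #(avail t x f) ≤
      (m : ℝ) ^ n * (1 / m) * ∑ j : Fin m, Real.log (1 + n * (((m - j : ℕ) : ℝ) / m) ^ 3) := by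
  rw [← sum_fiberwise univ (fun t : ZMod n → Fin m => t x), mul_sum]
  refine sum_le_sum fun j _ => ?_
  set c : ℝ := 1 + n * (((m - j : ℕ) : ℝ) / m) ^ 3 with hc
  have hcpos : 0 < c := by positivity
  -- the tangent to `log` at `c`, the bound for the expected number of available squares
  have hlog : ∀ t : ZMod n → Fin m, Real.log #(avail t x f) ≤
      (Real.log c - 1) + (#(avail t x f) : ℝ) / c := by
    intro t
    have hpos : (0 : ℝ) < #(avail t x f) := by
      exact_mod_cast card_pos.2 ⟨_, mem_avail_self t x f hf⟩
    have := Real.log_le_sub_one_of_pos (div_pos hpos hcpos)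
    rw [Real.log_div hpos.ne' hcpos.ne'] at this
    linarith
  have hcard : (#{t : ZMod n → Fin m | t x = j} : ℝ) = (m : ℝ) ^ n * (1 / m) := by
    simpa [ZMod.card] using card_times hm x ∅ (by simp) j
  refine (sum_le_sum fun t _ => hlog t).trans ?_
  rw [sum_add_distrib, ← sum_div, sum_const, nsmul_eq_mul, hcard]
  have h := div_le_div_of_nonneg_right (sum_card_avail_le hm h2 f hf x j) hcpos.le
  rw [← hc, mul_div_assoc _ c c, div_self hcpos.ne'] at h
  linarith

open Finset in
/-- The upper bound for a fixed number `m` of reveal times. -/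
theorem log_card_queenFuns_le {n m : ℕ} [NeZero n] (hm : 0 < m)
    (h2 : ∀ a b : ZMod n, a + a = b + b → a = b) (hne : (queenFuns n).Nonempty) :
    Real.log #(queenFuns n) ≤
      n * (1 / m * ∑ j : Fin m, Real.log (1 + n * (((m - j : ℕ) : ℝ) / m) ^ 3)) := by
  have h1 : ∀ t : ZMod n → Fin m, (#(queenFuns n) : ℝ) * Real.log #(queenFuns n) ≤
      ∑ f ∈ queenFuns n, ∑ x, Real.log #(avail t x f) := by
    intro t
    refine card_mul_log_card_le t (avail t) ?_ _ fun f hf x => mem_avail_self t x f hf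
    intro x σ τ h
    ext y
    simp only [avail, mem_filter, mem_univ, true_and]
    refine forall_congr' fun z => ?_
    refine imp_congr_right fun hz => ?_
    rw [h z hz]
  have hsum := sum_le_sum fun t (_ : t ∈ (univ : Finset (ZMod n → Fin m))) => h1 t
  rw [sum_comm] at hsum
  have hle : ∀ f ∈ queenFuns n, ∑ t : ZMod n → Fin m, ∑ x, Real.log #(avail t x f) ≤
      n * ((m : ℝ) ^ n * (1 / m) *
        ∑ j : Fin m, Real.log (1 + n * (((m - j : ℕ) : ℝ) / m) ^ 3)) := by
    intro f hf
    rw [sum_comm]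
    refine (sum_le_sum fun x _ => sum_log_avail_le hm h2 f hf x).trans ?_
    simp [ZMod.card]
  have hfin := hsum.trans (sum_le_sum hle)
  simp only [sum_const, nsmul_eq_mul, card_univ, Fintype.card_fun, ZMod.card, Fintype.card_fin,
    Nat.cast_pow] at hfin
  have hc : (0 : ℝ) < #(queenFuns n) := by exact_mod_cast card_pos.2 hne
  have hmn : (0 : ℝ) < (m : ℝ) ^ n := by positivity
  refine le_of_mul_le_mul_left ?_ (mul_pos hmn hc)
  linarith

/-! ### Parity of the board size -/

/-- There is no toroidal configuration for even `n`: the sum of all elements of `ZMod n` would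
equal twice itself, while it is `n / 2`. -/
theorem odd_of_mem_queenFuns {n : ℕ} [NeZero n] {f : ZMod n → ZMod n} (hf : f ∈ queenFuns n) :
    Odd n := by
  obtain ⟨h1, h2, -⟩ := mem_queenFuns.1 hf
  have e1 : ∑ x, f x = ∑ x : ZMod n, x := h1.sum_comp (fun x => x)
  have e2 : ∑ x, (x + f x) = ∑ x : ZMod n, x := h2.sum_comp (fun x => x)
  rw [Finset.sum_add_distrib, e1, add_eq_left] at e2
  have e3 : ∑ x : ZMod n, x = ((∑ i ∈ Finset.range n, i : ℕ) : ZMod n) := by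
    obtain ⟨k, rfl⟩ := Nat.exists_eq_succ_of_ne_zero (NeZero.ne n)
    rw [Nat.cast_sum, ← Fin.sum_univ_eq_sum_range (fun i => (i : ZMod (k + 1)))]
    refine Finset.sum_congr rfl fun x _ => ?_
    exact (ZMod.natCast_zmod_val (n := k + 1) x).symm
  rw [e3, ZMod.natCast_eq_zero_iff] at e2
  obtain ⟨c, hc⟩ := e2
  have e4 := Finset.sum_range_id_mul_two n
  have hn : 0 < n := Nat.pos_of_ne_zero (NeZero.ne n)
  rw [hc, mul_assoc] at e4
  have e5 := Nat.eq_of_mul_eq_mul_left hn e4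
  exact ⟨c, by omega⟩

theorem double_inj {n : ℕ} (hn : Odd n) (a b : ZMod n) (h : a + a = b + b) : a = b := by
  have hu : IsUnit ((2 : ℕ) : ZMod n) :=
    (ZMod.isUnit_iff_coprime 2 n).2 (Nat.coprime_two_left.2 hn)
  refine hu.mul_left_cancel ?_
  push_cast
  linear_combination h

/-! ### Asymptotics -/

open Finset Filter Topology in
/-- The Riemann sums of `∫₀¹ log (s ^ 3) ds = -3`, evaluated through Stirling's formula. -/
theorem exists_riemann (δ : ℝ) (hδ : 0 < δ) : ∃ m : ℕ, 0 < m ∧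
    1 / (m : ℝ) * ∑ j : Fin m, Real.log ((((m - j : ℕ) : ℝ) / m) ^ 3) < -3 + δ := by
  have hlim : Tendsto (fun m : ℕ => (Real.log (Stirling.stirlingSeq m) +
      1 / 2 * (Real.log 2 + Real.log m)) / (m : ℝ)) atTop (𝓝 0) := by
    have hs : Tendsto (fun m : ℕ => Real.log (Stirling.stirlingSeq m)) atTop
        (𝓝 (Real.log √Real.pi)) :=
      Stirling.tendsto_stirlingSeq_sqrt_pi.log (by positivity)
    have hl : Tendsto (fun m : ℕ => Real.log m / (m : ℝ)) atTop (𝓝 0) :=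
      (Real.isLittleO_log_id_atTop.tendsto_div_nhds_zero).comp tendsto_natCast_atTop_atTop
    have h1 := (hs.add_const (1 / 2 * Real.log 2)).div_atTop
      (tendsto_natCast_atTop_atTop (R := ℝ))
    have h2 := h1.add (hl.const_mul (1 / 2))
    rw [mul_zero, add_zero] at h2
    refine h2.congr fun m => ?_
    ring
  obtain ⟨m, hm, hm0⟩ := ((hlim.eventually_lt_const (show (0 : ℝ) < δ / 3 by positivity)).and
    (eventually_gt_atTop 0)).exists
  refine ⟨m, hm0, ?_⟩
  have hmR : (0 : ℝ) < m := by exact_mod_cast hm0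
  have hsum : ∑ j : Fin m, Real.log ((((m - j : ℕ) : ℝ) / m) ^ 3) =
      3 * (Real.log (m.factorial) - m * Real.log m) := by
    have hterm : ∀ j : Fin m, Real.log ((((m - j : ℕ) : ℝ) / m) ^ 3) =
        3 * (Real.log ((m - j : ℕ) : ℝ) - Real.log m) := by
      intro j
      have : ((m - j : ℕ) : ℝ) ≠ 0 := by
        have := j.2
        exact_mod_cast (Nat.sub_pos_of_lt this).ne'
      rw [Real.log_pow, Real.log_div this hmR.ne']
      norm_num
    rw [sum_congr rfl fun j _ => hterm j, ← mul_sum, sum_sub_distrib,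
      Fin.sum_univ_eq_sum_range (fun j => Real.log ((m - j : ℕ) : ℝ))]
    congr 2
    · rw [← Real.log_prod]
      · congr 1
        rw [← Finset.prod_range_add_one_eq_factorial, ← Finset.prod_range_reflect]
        push_cast
        refine prod_congr rfl fun j hj => ?_
        have := mem_range.1 hj
        have e : m - (m - 1 - j) = j + 1 := by omega
        rw [e]; push_cast; rfl
      · intro j hj
        exact_mod_cast (Nat.sub_pos_of_lt (mem_range.1 hj)).ne'
    · simp
  have hst := Stirling.log_stirlingSeq_formula m
  rw [Real.log_mul two_ne_zero hmR.ne', Real.log_div hmR.ne' (Real.exp_ne_zero _),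
    Real.log_exp] at hst
  rw [hsum, one_div_mul_eq_div, div_lt_iff₀ hmR]
  rw [div_lt_iff₀ hmR] at hm
  nlinarith

theorem toroidal_queens_upper_bound :
    ∀ ε : ℝ, 0 < ε → ∃ N : ℕ, ∀ n : ℕ, N ≤ n →
      (T n : ℝ) ≤ ((1 + ε) * n / Real.exp 3) ^ n := by
  open Finset Filter Topology in
  intro ε hε
  have hL : 0 < Real.log (1 + ε) := Real.log_pos (by linarith)
  obtain ⟨m, hm, hR⟩ := exists_riemann _ hL
  -- after factoring `n` out of the logarithms, only an additive `1 / n` remains to vanish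
  have hlim : Tendsto (fun n : ℕ => 1 / (m : ℝ) *
      ∑ j : Fin m, Real.log (1 / (n : ℝ) + (((m - j : ℕ) : ℝ) / m) ^ 3)) atTop
      (𝓝 (1 / (m : ℝ) * ∑ j : Fin m, Real.log ((((m - j : ℕ) : ℝ) / m) ^ 3))) := by
    refine Tendsto.const_mul _ (tendsto_finsetSum _ fun j _ => ?_)
    have h0 : (0 : ℝ) < (((m - j : ℕ) : ℝ) / m) ^ 3 := by
      have : (0 : ℝ) < ((m - j : ℕ) : ℝ) := by exact_mod_cast Nat.sub_pos_of_lt j.2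
      positivity
    refine Tendsto.log ?_ h0.ne'
    simpa using (tendsto_one_div_atTop_nhds_zero_nat (𝕜 := ℝ)).add_const
      ((((m - j : ℕ) : ℝ) / m) ^ 3)
  obtain ⟨N, hN⟩ := eventually_atTop.1 (hlim.eventually_lt_const hR)
  refine ⟨max N 1, fun n hn => ?_⟩
  have hn1 : 0 < n := lt_of_lt_of_le one_pos ((le_max_right _ _).trans hn)
  have hnR : (0 : ℝ) < n := by exact_mod_cast hn1
  have : NeZero n := ⟨hn1.ne'⟩
  have hT : (T n : ℝ) ≤ #(queenFuns n) := by exact_mod_cast T_le_card n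
  refine hT.trans ?_
  rcases (queenFuns n).eq_empty_or_nonempty with he | hne
  · rw [he]; simp only [card_empty, Nat.cast_zero]; positivity
  have hodd : Odd n := odd_of_mem_queenFuns hne.choose_spec
  have hbound := log_card_queenFuns_le hm (double_inj hodd) hne
  have hN' := hN n ((le_max_left _ _).trans hn)
  have hfac : 1 / (m : ℝ) * ∑ j : Fin m, Real.log (1 + n * (((m - j : ℕ) : ℝ) / m) ^ 3) =
      Real.log n + 1 / (m : ℝ) *
        ∑ j : Fin m, Real.log (1 / (n : ℝ) + (((m - j : ℕ) : ℝ) / m) ^ 3) := by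
    have hterm : ∀ j : Fin m, Real.log (1 + n * (((m - j : ℕ) : ℝ) / m) ^ 3) =
        Real.log n + Real.log (1 / (n : ℝ) + (((m - j : ℕ) : ℝ) / m) ^ 3) := by
      intro j
      rw [← Real.log_mul hnR.ne' (by positivity)]
      congr 1
      field_simp
    have hmR : (m : ℝ) ≠ 0 := by positivity
    rw [sum_congr rfl fun j _ => hterm j, sum_add_distrib]
    simp only [sum_const, card_univ, Fintype.card_fin, nsmul_eq_mul]
    field_simp
  rw [hfac] at hbound
  have hc : (0 : ℝ) < #(queenFuns n) := by exact_mod_cast card_pos.2 hne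
  rw [← Real.log_le_log_iff hc (by positivity), Real.log_pow,
    Real.log_div (by positivity) (Real.exp_ne_zero _), Real.log_mul (by positivity) hnR.ne',
    Real.log_exp]
  refine hbound.trans ?_
  gcongr
  linarith
end

section
/- Let α = 3 − 2·√(3/5)·arctan(√(5/3)) (so α ≈ 1.587). For every ε > 0 there exists N such that for every integer n ≥ N, the number Q(n) of n-queens configurations satisfies Q(n) ≤ ((1 + ε) · n / e^α)^n. -/
/-!
The rows of the board are read in a random order. For a fixed order `p` and a configuration `σ`, let
`choices σ p k` be the number of columns which, at the `k`-th step, still occur in a configuration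
agreeing with `σ` on the rows already read. The product over `k` of the reciprocals is the probability
of producing `σ` by choosing uniformly at each step, so these products add up to at most `1` over all
`σ` (`sum_prod_inv_extCount_le_one`). Averaging over `p`, with an inequality of Jensen type
(`one_add_sum_le_prod`), the number of configurations is at most the product over `k` of any upper
bound, valid for every `σ`, for the average of `choices σ p k` over `p` (`card_queens_le`).

To bound that average, let `x` be the fraction of rows still unread. A cell `(i, c)` without a queen is
attacked by exactly `1 + d` queens of other rows, one in its column and `d ∈ {0, 1, 2}` on its two
diagonals, and it remains available only if all their rows are unread, which has probability at most
`x ^ (1 + d)` (`card_laterPerms_le`). Since `σ` is a permutation, the diagonals through its queens have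
total length at least `5 n ^ 2 / 4 - O(n)` (`le_sum_card_diag`): the total is least when the queens
stay as far from the centre as the row and column constraints allow. As `x ^ d` lies below its chord
between `d = 0` and `d = 2`, the average of `choices σ p k` is at most `n x (3 / 8 + 5 / 8 x ^ 2) + O(1)`
(`sum_pow_attackers_le`).

In the product over `k`, the factors `n x` contribute about `n! ≈ (n / e) ^ n`, and the factors
`3 / 8 + 5 / 8 x ^ 2` contribute the exponential of `n ∫₀¹ log (3 / 8 + 5 / 8 x ^ 2) dx`
(`prod_hfun_le`). The integral is `-2 + 2 √(3/5) arctan √(5/3)`, which gives the stated constant; the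
polynomial factors that remain are absorbed by `(1 + ε) ^ n`.
-/

/-- A classical `n`-queens configuration: a permutation `σ` of `Fin n` such that
no two queens share a diagonal, i.e. for `i ≠ j`, `σ i - σ j ∉ {i - j, j - i}` as integers. -/
def IsQueens (n : ℕ) (σ : Equiv.Perm (Fin n)) : Prop :=
  ∀ i j : Fin n, i ≠ j →
    ((σ i : ℤ) - (σ j : ℤ) ≠ (i : ℤ) - (j : ℤ) ∧
     (σ i : ℤ) - (σ j : ℤ) ≠ (j : ℤ) - (i : ℤ))

/-- `Q n` is the number of classical `n`-queens configurations. -/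
noncomputable def Q (n : ℕ) : ℕ :=
  Nat.card {σ : Equiv.Perm (Fin n) // IsQueens n σ}

open Finset

/-! ### Sequential choice -/

/-- The number of values available at coordinate `k` to an element of `S` that agrees with `f` on
all coordinates before `k`. -/
noncomputable def extCount {n : ℕ} {C : Type*} [DecidableEq C] (S : Finset (Fin n → C))
    (f : Fin n → C) (k : Fin n) : ℕ :=
  ((S.filter (fun g => ∀ j < k, g j = f j)).image (fun g => g k)).card

/-- Choose the coordinates one after another, each time uniformly among the values that still extend
to an element of `S`: the summand is the probability that this process produces `f`. -/
theorem sum_prod_inv_extCount_le_one {C : Type*} [DecidableEq C] :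
    ∀ {n : ℕ} (S : Finset (Fin n → C)),
      ∑ f ∈ S, ∏ k, ((extCount S f k : ℝ))⁻¹ ≤ 1 := by
  intro n
  induction n with
  | zero =>
    intro S
    simp only [Finset.univ_eq_empty, Finset.prod_empty, Finset.sum_const, nsmul_eq_mul, mul_one]
    exact_mod_cast Finset.card_le_one_of_subsingleton S
  | succ n ih =>
    intro S
    set I := S.image (fun g => g 0) with hI
    have hmaps : ∀ f ∈ S, f 0 ∈ I := fun f hf => mem_image_of_mem (fun g : Fin (n+1) → C => g 0) hf
    rw [← Finset.sum_fiberwise_of_maps_to hmaps]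
    have hc : ∀ c ∈ I, ∑ f ∈ S with f 0 = c, ∏ k, ((extCount S f k : ℝ))⁻¹ ≤ (I.card : ℝ)⁻¹ := by
      intro c _
      set T := (S.filter (fun f => f 0 = c)).image Fin.tail with hT
      have hinj : Set.InjOn (Fin.tail : (Fin (n+1) → C) → (Fin n → C))
          (S.filter (fun f => f 0 = c) : Finset (Fin (n+1) → C)) := by
        intro f hf g hg h
        simp only [coe_filter, Set.mem_ofPred_eq] at hf hg
        rw [← Fin.cons_self_tail f, ← Fin.cons_self_tail g, h, hf.2, hg.2]
      have hterm : ∀ f ∈ S.filter (fun f => f 0 = c),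
          ∏ k, ((extCount S f k : ℝ))⁻¹
            = (I.card : ℝ)⁻¹ * ∏ k, ((extCount T (Fin.tail f) k : ℝ))⁻¹ := by
        intro f hf
        rw [mem_filter] at hf
        rw [Fin.prod_univ_succ]
        congr 1
        · simp [extCount, hI]
        · refine Finset.prod_congr rfl fun k _ => ?_
          congr 2
          unfold extCount
          congr 1
          ext d
          simp only [mem_image, mem_filter, hT]
          constructor
          · rintro ⟨g, ⟨hg, hgf⟩, rfl⟩
            refine ⟨Fin.tail g, ⟨⟨g, ⟨hg, ?_⟩, rfl⟩, fun j hj => ?_⟩, rfl⟩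
            · rw [hgf 0 (Fin.succ_pos k), hf.2]
            · exact hgf j.succ (Fin.succ_lt_succ_iff.2 hj)
          · rintro ⟨_, ⟨⟨g, ⟨hg, hg0⟩, rfl⟩, hgf⟩, rfl⟩
            refine ⟨g, ⟨hg, fun j hj => ?_⟩, rfl⟩
            induction j using Fin.cases with
            | zero => rw [hg0, hf.2]
            | succ j => exact hgf j (Fin.succ_lt_succ_iff.1 hj)
      rw [Finset.sum_congr rfl hterm, ← Finset.mul_sum,
        ← Finset.sum_image (f := fun t : Fin n → C => ∏ k, ((extCount T t k : ℝ))⁻¹) hinj]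
      exact mul_le_of_le_one_right (by positivity) (ih T)
    refine (Finset.sum_le_sum hc).trans ?_
    rw [Finset.sum_const, nsmul_eq_mul]
    exact mul_inv_le_one

/-- This linear lower bound for a product lets the average over all reading orders enter the
individual factors; it takes the place of Jensen's inequality for the logarithm. -/
theorem one_add_sum_le_prod {ι : Type*} (s : Finset ι) (y : ι → ℝ) (hy : ∀ k ∈ s, 0 < y k) :
    1 + ∑ k ∈ s, (1 - (y k)⁻¹) ≤ ∏ k ∈ s, y k := by
  calc 1 + ∑ k ∈ s, (1 - (y k)⁻¹) ≤ ∑ k ∈ s, Real.log (y k) + 1 := by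
        rw [add_comm]
        gcongr with k hk
        exact Real.one_sub_inv_le_log_of_pos (hy k hk)
    _ ≤ Real.exp (∑ k ∈ s, Real.log (y k)) := Real.add_one_le_exp _
    _ = ∏ k ∈ s, y k := by
        rw [Real.exp_sum]
        exact Finset.prod_congr rfl fun k hk => Real.exp_log (hy k hk)

/-! ### Random orders -/

/-- A permutation `p` is read as an order on rows, row `r` having position `p r`. These are the orders
in which row `i` has position `k` and every row of `R` comes later. -/
def laterPerms {n : ℕ} (k i : Fin n) (R : Finset (Fin n)) : Finset (Equiv.Perm (Fin n)) :=
  univ.filter (fun p => p i = k ∧ ∀ r ∈ R, k < p r)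

theorem card_laterPerms_empty {n : ℕ} (k i : Fin n) :
    (laterPerms k i ∅).card * n = n.factorial := by
  have h : ∀ j, (laterPerms k j ∅).card = (laterPerms k i ∅).card := by
    intro j
    refine Finset.card_bij' (fun p _ => (Equiv.swap i j).trans p)
      (fun p _ => (Equiv.swap i j).trans p) ?_ ?_ ?_ ?_
    · intro p hp; simpa [laterPerms] using hp
    · intro p hp; simpa [laterPerms] using hp
    · intro p _; ext; simp
    · intro p _; ext; simp
  have h2 : ∑ j, (laterPerms k j ∅).card = n.factorial := by
    simp only [laterPerms, card_filter]
    rw [Finset.sum_comm]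
    have : ∀ p : Equiv.Perm (Fin n),
        (∑ j, if p j = k ∧ ∀ r ∈ (∅ : Finset (Fin n)), k < p r then 1 else 0) = 1 := by
      intro p
      simp [← Equiv.eq_symm_apply]
    rw [Finset.sum_congr rfl fun p _ => this p]
    simp [Fintype.card_perm]
  rw [← h2, Finset.sum_congr rfl fun j _ => h j]
  simp [mul_comm]

/-- All rows outside `R ∪ {i}` play symmetric roles, and in each order of `laterPerms k i R` exactly
`n - 1 - k - #R` of them come after position `k`; double counting gives the identity. -/
theorem card_laterPerms_insert {n : ℕ} (k i : Fin n) (R : Finset (Fin n)) (hi : i ∉ R)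
    (r : Fin n) (hr : r ∉ R) (hri : r ≠ i) :
    (laterPerms k i (insert r R)).card * (n - 1 - R.card)
      = (laterPerms k i R).card * (n - 1 - k - R.card) := by
  have hcard : (univ \ insert i R : Finset (Fin n)).card = n - 1 - R.card := by
    rw [card_sdiff_of_subset (subset_univ _), card_insert_of_notMem hi, card_univ, Fintype.card_fin]
    omega
  have h : ∀ s ∈ (univ \ insert i R : Finset (Fin n)),
      (laterPerms k i (insert s R)).card = (laterPerms k i (insert r R)).card := by
    intro s hs
    simp only [mem_sdiff, mem_univ, mem_insert, not_or, true_and] at hs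
    have key : ∀ q ∈ R, Equiv.swap r s q = q := by
      intro q hq
      exact Equiv.swap_apply_of_ne_of_ne (by rintro rfl; exact hr hq) (by rintro rfl; exact hs.2 hq)
    have key2 : Equiv.swap r s i = i :=
      Equiv.swap_apply_of_ne_of_ne (Ne.symm hri) (Ne.symm hs.1)
    refine Finset.card_bij' (fun p _ => (Equiv.swap r s).trans p)
      (fun p _ => (Equiv.swap r s).trans p) ?_ ?_ ?_ ?_
    · intro p hp
      simp only [laterPerms, mem_filter, mem_univ, true_and, mem_insert, forall_eq_or_imp] at hp ⊢
      refine ⟨by simp [key2, hp.1], by simpa using hp.2.1, fun q hq => ?_⟩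
      simpa [key q hq] using hp.2.2 q hq
    · intro p hp
      simp only [laterPerms, mem_filter, mem_univ, true_and, mem_insert, forall_eq_or_imp] at hp ⊢
      refine ⟨by simp [key2, hp.1], by simpa using hp.2.1, fun q hq => ?_⟩
      simpa [key q hq] using hp.2.2 q hq
    · intro p _; ext; simp
    · intro p _; ext; simp
  have h2 : ∑ s ∈ (univ \ insert i R : Finset (Fin n)), (laterPerms k i (insert s R)).card
      = (laterPerms k i R).card * (n - 1 - k - R.card) := by
    have : ∀ s, laterPerms k i (insert s R) = (laterPerms k i R).filter (fun p => k < p s) := by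
      intro s
      ext p
      simp only [laterPerms, mem_filter, mem_univ, true_and, mem_insert, forall_eq_or_imp]
      tauto
    simp only [this, card_filter]
    rw [Finset.sum_comm, Finset.sum_const_nat]
    intro p hp
    simp only [laterPerms, mem_filter, mem_univ, true_and] at hp
    rw [← card_filter]
    have hset : (univ \ insert i R).filter (fun s => k < p s)
        = ((Finset.Ioi k).map p.symm.toEmbedding) \ R := by
      ext s
      simp only [mem_filter, mem_sdiff, mem_univ, true_and, mem_insert, not_or, mem_map_equiv,
        Equiv.symm_symm, mem_Ioi]
      constructor
      · tauto
      · rintro ⟨h1, h2⟩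
        refine ⟨⟨?_, h2⟩, h1⟩
        rintro rfl
        exact absurd hp.1 h1.ne'
    rw [hset, card_sdiff_of_subset, card_map, Fin.card_Ioi]
    intro q hq
    simpa [mem_map_equiv] using hp.2 q hq
  rw [← h2, Finset.sum_congr rfl h, Finset.sum_const, hcard, smul_eq_mul, mul_comm]

/-- In a uniformly random order, row `i` has position `k` and all rows of `R` come later with
probability at most `((n - 1 - k) / (n - 1)) ^ #R / n`. -/
theorem card_laterPerms_le {n : ℕ} (hn : 2 ≤ n) (k i : Fin n) (R : Finset (Fin n)) (hi : i ∉ R) :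
    ((laterPerms k i R).card : ℝ) * n
      ≤ n.factorial * (((n - 1 - k : ℕ) : ℝ) / ((n - 1 : ℕ) : ℝ)) ^ R.card := by
  induction R using Finset.induction_on with
  | empty => simpa using (by exact_mod_cast (card_laterPerms_empty k i).le)
  | insert r R hr ih =>
    simp only [mem_insert, not_or] at hi
    have ih := ih hi.2
    have hrec := card_laterPerms_insert k i R hi.2 r hr (Ne.symm hi.1)
    have hlt : R.card + 1 ≤ n - 1 := by
      have : (insert i (insert r R)).card ≤ n := by
        simpa using Finset.card_le_univ (insert i (insert r R))
      rw [card_insert_of_notMem (by simp [hi]), card_insert_of_notMem hr] at this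
      omega
    rw [card_insert_of_notMem hr, pow_succ, ← mul_assoc]
    set m := R.card with hm
    set a := n - 1 - (k : ℕ) with ha
    set b := n - 1 with hb
    have hab : a ≤ b := Nat.sub_le _ _
    have hbm : (0 : ℝ) < ((b - m : ℕ) : ℝ) := by
      have : 0 < b - m := by omega
      exact_mod_cast this
    have hb0 : (0 : ℝ) < (b : ℝ) := by
      have : 0 < b := by omega
      exact_mod_cast this
    have hratio : ((a - m : ℕ) : ℝ) / ((b - m : ℕ) : ℝ) ≤ (a : ℝ) / b := by
      rw [div_le_div_iff₀ hbm hb0]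
      norm_cast
      rcases le_total a m with h | h
      · simp [Nat.sub_eq_zero_of_le h]
      · zify [h, (by omega : m ≤ b)]
        have : (m : ℤ) * a ≤ m * b := by gcongr
        linarith
    have hrec' : ((laterPerms k i (insert r R)).card : ℝ)
        = (laterPerms k i R).card * (((a - m : ℕ) : ℝ) / ((b - m : ℕ) : ℝ)) := by
      rw [← mul_div_assoc, eq_div_iff hbm.ne']
      exact_mod_cast hrec
    rw [hrec', mul_right_comm]
    gcongr

/-! ### Asymptotics of the product of the step bounds -/

theorem factorial_le_exp {n : ℕ} (hn : 1 ≤ n) :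
    (n.factorial : ℝ) ≤ Real.exp 1 * n * (n / Real.exp 1) ^ n := by
  induction n, hn using Nat.le_induction with
  | base => simp
  | succ n hn ih =>
    have hn0 : (0 : ℝ) < n := by exact_mod_cast hn
    have hlog : (1 : ℝ) ≤ (n + 1 : ℕ) * Real.log ((n + 1) / n) := by
      have := Real.one_sub_inv_le_log_of_pos (show (0:ℝ) < (n + 1) / n by positivity)
      have h2 : 1 - (((n:ℝ) + 1) / n)⁻¹ = 1 / (n + 1) := by field_simp; ring
      rw [h2, div_le_iff₀ (by positivity)] at this
      push_cast
      linarith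
    have hexp : Real.exp 1 * (n : ℝ) ^ (n + 1) ≤ ((n : ℝ) + 1) ^ (n + 1) := by
      have := Real.exp_le_exp.2 hlog
      rw [Real.exp_nat_mul, Real.exp_log (by positivity), div_pow, le_div_iff₀ (by positivity)]
        at this
      exact this
    rw [Nat.factorial_succ]
    push_cast
    calc ((n : ℝ) + 1) * n.factorial
        ≤ (n + 1) * (Real.exp 1 * n * (n / Real.exp 1) ^ n) := by gcongr
      _ = (n + 1) / Real.exp 1 ^ n * (Real.exp 1 * (n : ℝ) ^ (n + 1)) := by
          rw [div_pow]; field_simp; ring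
      _ ≤ (n + 1) / Real.exp 1 ^ n * ((n : ℝ) + 1) ^ (n + 1) := by gcongr
      _ = _ := by rw [div_pow]; field_simp; ring

/-- The function whose value at `x`, multiplied by `x n`, is asymptotically an upper bound for the
average number of columns available to a row when a fraction `x` of the rows is still to be read. -/
noncomputable def hfun (x : ℝ) : ℝ := 3 / 8 + 5 / 8 * x ^ 2

theorem hfun_pos (x : ℝ) : 0 < hfun x := by unfold hfun; positivity

/-- The antiderivative of `log ∘ hfun` vanishing at `0`. -/
noncomputable def Ffun (x : ℝ) : ℝ :=
  x * Real.log (hfun x) - 2 * x + 2 * Real.sqrt (3 / 5) * Real.arctan (Real.sqrt (5 / 3) * x)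

theorem hasDerivAt_Ffun (x : ℝ) : HasDerivAt Ffun (Real.log (hfun x)) x := by
  have h1 : HasDerivAt hfun (5 / 8 * (2 * x)) x := by
    unfold hfun
    simpa using ((hasDerivAt_pow 2 x).const_mul (5 / 8 : ℝ)).const_add (3 / 8 : ℝ)
  have h2 := (hasDerivAt_id x).mul (h1.log (hfun_pos x).ne')
  have h3 := ((hasDerivAt_id x).const_mul (Real.sqrt (5 / 3))).arctan.const_mul
    (2 * Real.sqrt (3 / 5))
  have h4 := (h2.sub ((hasDerivAt_id x).const_mul 2)).add h3
  have h5 : HasDerivAt Ffun _ x := h4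
  refine h5.congr_deriv ?_
  have hs : Real.sqrt (3 / 5) * Real.sqrt (5 / 3) = 1 := by
    rw [← Real.sqrt_mul (by norm_num)]; norm_num
  have hsq : Real.sqrt (5 / 3) ^ 2 = 5 / 3 := Real.sq_sqrt (by norm_num)
  have hp := hfun_pos x
  simp only [id, mul_pow, hsq, mul_one]
  have e : 2 * Real.sqrt (3 / 5) * (1 / (1 + 5 / 3 * x ^ 2) * Real.sqrt (5 / 3))
      = 2 / (1 + 5 / 3 * x ^ 2) := by
    calc _ = 2 * (Real.sqrt (3 / 5) * Real.sqrt (5 / 3)) / (1 + 5 / 3 * x ^ 2) := by ring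
      _ = _ := by rw [hs, mul_one]
  rw [e]
  have : (0:ℝ) < 1 + 5 / 3 * x ^ 2 := by positivity
  unfold hfun at *
  field_simp
  ring

theorem log_hfun_mono {x y : ℝ} (hx : 0 ≤ x) (hxy : x ≤ y) :
    Real.log (hfun x) ≤ Real.log (hfun y) := by
  refine Real.log_le_log (hfun_pos x) ?_
  unfold hfun
  gcongr

/-- `Ffun` grows at least at the rate of its slope at the left endpoint, its derivative being monotone. -/
theorem log_hfun_le_Ffun {x y : ℝ} (hx : 0 ≤ x) (hxy : x < y) :
    Real.log (hfun x) * (y - x) ≤ Ffun y - Ffun x := by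
  obtain ⟨c, hc, h⟩ := exists_hasDerivAt_eq_slope Ffun (fun x => Real.log (hfun x)) hxy
    (fun z _ => (hasDerivAt_Ffun z).continuousAt.continuousWithinAt)
    (fun z _ => hasDerivAt_Ffun z)
  have h5 := log_hfun_mono hx hc.1.le
  rw [eq_div_iff (sub_pos.2 hxy).ne'] at h
  rw [← h]
  exact mul_le_mul_of_nonneg_right h5 (sub_pos.2 hxy).le

/-- A Riemann sum estimate: the factor `8 / 3 = hfun 1 / hfun 0` pays for passing from right to left
endpoints. -/
theorem prod_hfun_le {n : ℕ} (hn : 1 ≤ n) :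
    ∏ j ∈ range n, hfun (((j : ℝ) + 1) / n) ≤ 8 / 3 * Real.exp (Ffun 1) ^ n := by
  have hn0 : (0 : ℝ) < n := by exact_mod_cast hn
  have h1 : ∑ j ∈ range n, Real.log (hfun ((j : ℝ) / n)) ≤ n * Ffun 1 := by
    have : ∀ j ∈ range n, Real.log (hfun ((j : ℝ) / n))
        ≤ n * (Ffun (((j + 1 : ℕ) : ℝ) / n) - Ffun ((j : ℝ) / n)) := by
      intro j _
      have := log_hfun_le_Ffun (x := (j : ℝ) / n) (y := ((j + 1 : ℕ) : ℝ) / n) (by positivity)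
        (by gcongr; simp)
      have e : ((j + 1 : ℕ) : ℝ) / n - (j : ℝ) / n = 1 / n := by push_cast; ring
      rw [e, mul_one_div, div_le_iff₀ hn0] at this
      linarith
    refine (Finset.sum_le_sum this).trans ?_
    rw [← Finset.mul_sum, Finset.sum_range_sub (fun j : ℕ => Ffun ((j : ℝ) / n))]
    simp [Ffun, hn0.ne']
  have h2 : ∏ j ∈ range n, hfun ((j : ℝ) / n) ≤ Real.exp (Ffun 1) ^ n := by
    rw [← Real.exp_nat_mul]
    refine le_trans (le_of_eq ?_) (Real.exp_le_exp.2 h1)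
    rw [Real.exp_sum]
    exact Finset.prod_congr rfl fun j _ => (Real.exp_log (hfun_pos _)).symm
  have h3 : (∏ j ∈ range n, hfun (((j : ℝ) + 1) / n)) * hfun 0
      = (∏ j ∈ range n, hfun ((j : ℝ) / n)) * hfun 1 := by
    have a := Finset.prod_range_succ (fun j : ℕ => hfun ((j : ℝ) / n)) n
    have b := Finset.prod_range_succ' (fun j : ℕ => hfun ((j : ℝ) / n)) n
    rw [a] at b
    simpa [hn0.ne'] using b.symm
  have h0 : hfun 0 = 3 / 8 := by norm_num [hfun]
  have h1' : hfun 1 = 1 := by norm_num [hfun]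
  rw [h0, h1'] at h3
  linarith

theorem prod_add_nine_le (n : ℕ) :
    ∏ j ∈ range n, ((j : ℝ) + 9) ≤ ((n : ℝ) + 8) ^ 8 * n.factorial := by
  have h : ∏ j ∈ range n, (j + 9) ≤ (n + 8) ^ 8 * n.factorial := by
    have h1 : ∏ j ∈ range n, (j + 9) = Nat.ascFactorial 9 n := by
      rw [Nat.ascFactorial_eq_prod_range]
      exact Finset.prod_congr rfl fun j _ => add_comm _ _
    have h2 := Nat.factorial_mul_ascFactorial 8 n
    have h3 := Nat.factorial_mul_ascFactorial n 8
    have h4 : (n + 1).ascFactorial 8 ≤ (n + 8) ^ 8 := by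
      simpa [Nat.add_assoc] using Nat.ascFactorial_le_pow_add n 8
    rw [h1]
    calc Nat.ascFactorial 9 n ≤ Nat.factorial 8 * Nat.ascFactorial 9 n :=
          Nat.le_mul_of_pos_left _ (Nat.factorial_pos 8)
      _ = n.factorial * (n + 1).ascFactorial 8 := by rw [h2, h3, add_comm]
      _ ≤ _ := by rw [mul_comm]; gcongr
  exact_mod_cast h

theorem eventually_poly_le (ε : ℝ) (hε : 0 < ε) : ∃ N : ℕ, ∀ n : ℕ, N ≤ n →
    ((n : ℝ) + 8) ^ 8 * (Real.exp 1 * n) * (8 / 3) ≤ (1 + ε) ^ n := by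
  have h := (tendsto_pow_const_div_const_pow_of_one_lt 9 (show 1 < 1 + ε by linarith)).const_mul
    (9 ^ 8 * Real.exp 1 * (8 / 3))
  rw [mul_zero] at h
  obtain ⟨N, hN⟩ := Filter.eventually_atTop.1 (h.eventually_lt_const one_pos)
  refine ⟨max N 1, fun n hn => ?_⟩
  have h1 := hN n (le_trans (le_max_left _ _) hn)
  have hn1 : (1 : ℝ) ≤ n := by exact_mod_cast le_trans (le_max_right _ _) hn
  have hp : 0 < (1 + ε) ^ n := by positivity
  rw [← mul_div_assoc, div_lt_one hp] at h1
  refine le_trans ?_ h1.le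
  calc ((n : ℝ) + 8) ^ 8 * (Real.exp 1 * n) * (8 / 3)
      ≤ (9 * n) ^ 8 * (Real.exp 1 * n) * (8 / 3) := by gcongr; linarith
    _ = _ := by ring

/-! ### Diagonal lengths -/

/-- The discrete form of `∫ max 0 (y - 2 t) dt = y ^ 2 / 4`, by telescoping. -/
theorem sum_max_sub_le (y : ℝ) (hy : -2 ≤ y) (m : ℕ) :
    ∑ a ∈ range m, max 0 (y - 2 * a) ≤ (y + 2) ^ 2 / 4 := by
  have h : ∀ a ∈ range m, max 0 (y - 2 * a)
      ≤ (max 0 (y + 2 - 2 * a)) ^ 2 / 4 - (max 0 (y + 2 - 2 * (a + 1 : ℕ))) ^ 2 / 4 := by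
    intro a _
    push_cast
    rcases le_total 0 (y - 2 * a) with h | h
    · rw [max_eq_right h, max_eq_right (by linarith), max_eq_right (by linarith)]
      nlinarith
    · rw [max_eq_left h, max_eq_left (a := (0 : ℝ)) (b := y + 2 - 2 * (a + 1)) (by linarith)]
      have := sq_nonneg (max 0 (y + 2 - 2 * (a : ℝ)))
      linarith
  refine (Finset.sum_le_sum h).trans ?_
  rw [Finset.sum_range_sub' (fun a : ℕ => (max 0 (y + 2 - 2 * (a : ℝ))) ^ 2 / 4)]
  have h0 : max 0 (y + 2 - 2 * ((0 : ℕ) : ℝ)) = y + 2 := by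
    rw [max_eq_right] <;> push_cast <;> linarith
  rw [h0]
  have := sq_nonneg (max 0 (y + 2 - 2 * (m : ℝ)))
  linarith

/-- The amount by which the distance `|2 a - (n - 1)|` of line `a` from the middle of the board
(in half units) exceeds `n / 2`. -/
noncomputable def excess (n : ℕ) (a : ℝ) : ℝ :=
  max 0 (2 * a - (n - 1) - n / 2) + max 0 (-(2 * a - (n - 1)) - n / 2)

theorem sum_excess_le (n : ℕ) :
    ∑ a : Fin n, excess n (a : ℕ) ≤ (n : ℝ) ^ 2 / 8 + n / 2 + 1 / 2 := by
  rw [Fin.sum_univ_eq_sum_range (fun a : ℕ => excess n a) n]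
  unfold excess
  have hb := sum_max_sub_le ((n : ℝ) / 2 - 1) (by linarith [(Nat.cast_nonneg n : (0:ℝ) ≤ n)]) n
  have e2 : ∑ a ∈ range n, max 0 (-(2 * (a : ℝ) - (n - 1)) - n / 2)
      = ∑ a ∈ range n, max 0 ((n : ℝ) / 2 - 1 - 2 * a) :=
    Finset.sum_congr rfl fun a _ => by congr 1; ring
  have e1 : ∑ a ∈ range n, max 0 (2 * (a : ℝ) - (n - 1) - n / 2)
      = ∑ a ∈ range n, max 0 ((n : ℝ) / 2 - 1 - 2 * a) := by
    rw [← Finset.sum_range_reflect]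
    refine Finset.sum_congr rfl fun a ha => ?_
    have : a + 1 ≤ n := mem_range.1 ha
    have h : ((n - 1 - a : ℕ) : ℝ) = n - 1 - a := by
      rw [Nat.sub_sub, Nat.cast_sub (by omega)]; push_cast; ring
    rw [h]; congr 1; ring
  rw [Finset.sum_add_distrib, e1, e2]
  nlinarith

/-- The left side, the number of cells that the two diagonals through `(a, b)` are short of `2 n`, is
`max |A| |B|` with `A = 2 a - (n - 1)` and `B = 2 b - (n - 1)`, and
`max u v ≤ t + (u - t)⁺ + (v - t)⁺`. Since the threshold is `t = n / 2`, the bound has the right order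
when `|A| + |B|` is close to `n`, which is the case that minimises the total length of the diagonals
over all permutations. -/
theorem abs_add_abs_le_excess (n : ℕ) (a b : ℝ) :
    |a - b| + |a - (n - 1 - b)| ≤ n / 2 + (excess n a + excess n b) := by
  unfold excess
  have ha1 := le_max_left 0 (2 * a - (n - 1) - n / 2)
  have ha2 := le_max_right 0 (2 * a - (n - 1) - n / 2)
  have ha3 := le_max_left 0 (-(2 * a - (n - 1)) - n / 2)
  have ha4 := le_max_right 0 (-(2 * a - (n - 1)) - n / 2)
  have hb1 := le_max_left 0 (2 * b - (n - 1) - n / 2)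
  have hb2 := le_max_right 0 (2 * b - (n - 1) - n / 2)
  have hb3 := le_max_left 0 (-(2 * b - (n - 1)) - n / 2)
  have hb4 := le_max_right 0 (-(2 * b - (n - 1)) - n / 2)
  rcases abs_cases (a - b) with ⟨h1, _⟩ | ⟨h1, _⟩ <;>
    rcases abs_cases (a - (n - 1 - b)) with ⟨h2, _⟩ | ⟨h2, _⟩ <;> rw [h1, h2] <;> linarith

/-- The diagonal through `(a, b)` has at least `n - |a - b|` cells. -/
theorem le_sum_diag {n : ℕ} (a b : Fin n) :
    (n : ℝ) - |((a : ℕ) : ℝ) - ((b : ℕ) : ℝ)|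
      ≤ ((univ.filter (fun q : Fin n × Fin n => (b : ℤ) - (q.2 : ℤ) = (a : ℤ) - (q.1 : ℤ))).card : ℝ) := by
  have key : n - ((a : ℕ) - (b : ℕ) + ((b : ℕ) - (a : ℕ))) ≤
      (univ.filter (fun q : Fin n × Fin n => (b : ℤ) - (q.2 : ℤ) = (a : ℤ) - (q.1 : ℤ))).card := by
    rw [← Finset.card_range (n - ((a : ℕ) - (b : ℕ) + ((b : ℕ) - (a : ℕ))))]
    have hn : 0 < n := a.pos
    refine Finset.card_le_card_of_injOn
      (fun t => ((⟨(t + ((a : ℕ) - b)) % n, Nat.mod_lt _ hn⟩ : Fin n),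
        (⟨(t + ((b : ℕ) - a)) % n, Nat.mod_lt _ hn⟩ : Fin n))) ?_ ?_
    · intro t ht
      simp only [coe_range, Set.mem_Iio] at ht
      have h1 : (t + ((a : ℕ) - b)) % n = t + ((a : ℕ) - b) := Nat.mod_eq_of_lt (by omega)
      have h2 : (t + ((b : ℕ) - a)) % n = t + ((b : ℕ) - a) := Nat.mod_eq_of_lt (by omega)
      simp only [mem_coe, mem_filter, mem_univ, true_and, h1, h2]
      omega
    · intro t ht s hs h
      simp only [coe_range, Set.mem_Iio] at ht hs
      simp only [Prod.mk.injEq, Fin.mk.injEq] at h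
      have h1 : (t + ((a : ℕ) - b)) % n = t + ((a : ℕ) - b) := Nat.mod_eq_of_lt (by omega)
      have h2 : (s + ((a : ℕ) - b)) % n = s + ((a : ℕ) - b) := Nat.mod_eq_of_lt (by omega)
      have := h.1
      rw [h1, h2] at this
      omega
  have hcast : (n : ℝ) - |((a : ℕ) : ℝ) - ((b : ℕ) : ℝ)|
      = ((n - ((a : ℕ) - (b : ℕ) + ((b : ℕ) - (a : ℕ))) : ℕ) : ℝ) := by
    have ha := a.isLt
    have hb := b.isLt
    rw [Nat.cast_sub (by omega)]
    rcases le_total (a : ℕ) (b : ℕ) with h | h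
    · have h' : ((a : ℕ) : ℝ) ≤ (b : ℕ) := by exact_mod_cast h
      rw [Nat.sub_eq_zero_of_le h, abs_of_nonpos (by linarith), zero_add, Nat.cast_sub h]
      ring
    · have h' : ((b : ℕ) : ℝ) ≤ (a : ℕ) := by exact_mod_cast h
      rw [Nat.sub_eq_zero_of_le h, abs_of_nonneg (by linarith), add_zero, Nat.cast_sub h]
  rw [hcast]
  exact_mod_cast key

/-- The antidiagonal through `(a, b)` has at least `n - |a - (n - 1 - b)|` cells, by reflection of the
columns. -/
theorem le_sum_antidiag {n : ℕ} (a b : Fin n) :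
    (n : ℝ) - |((a : ℕ) : ℝ) - (n - 1 - ((b : ℕ) : ℝ))|
      ≤ ((univ.filter (fun q : Fin n × Fin n => (b : ℤ) - (q.2 : ℤ) = (q.1 : ℤ) - (a : ℤ))).card : ℝ) := by
  have h := le_sum_diag a b.rev
  have hrev : ∀ b : Fin n, ((b.rev : Fin n) : ℤ) = n - 1 - (b : ℤ) := by
    intro b; have := b.isLt; rw [Fin.val_rev]; omega
  have e : (((b.rev : Fin n) : ℕ) : ℝ) = n - 1 - ((b : ℕ) : ℝ) := by exact_mod_cast hrev b
  rw [e] at h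
  refine h.trans (le_of_eq ?_)
  congr 1
  refine Finset.card_bij' (fun q _ => (q.1, q.2.rev)) (fun q _ => (q.1, q.2.rev)) ?_ ?_ ?_ ?_
  · intro q hq
    simp only [mem_filter, mem_univ, true_and, hrev] at hq ⊢
    linarith
  · intro q hq
    simp only [mem_filter, mem_univ, true_and, hrev] at hq ⊢
    linarith
  · intro q _; simp
  · intro q _; simp

/-- The rows of the queens of `σ` on the diagonal through the cell `(i, c)`. -/
def diagQueens {n : ℕ} (σ : Equiv.Perm (Fin n)) (i c : Fin n) : Finset (Fin n) :=
  univ.filter (fun r => (σ r : ℤ) - (c : ℤ) = (r : ℤ) - (i : ℤ))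

/-- The rows of the queens of `σ` on the antidiagonal through the cell `(i, c)`. -/
def antidiagQueens {n : ℕ} (σ : Equiv.Perm (Fin n)) (i c : Fin n) : Finset (Fin n) :=
  univ.filter (fun r => (σ r : ℤ) - (c : ℤ) = (i : ℤ) - (r : ℤ))

/-- The rows other than `i` whose queen in `σ` attacks the cell `(i, c)`, along its column or along a
diagonal. -/
def attackers {n : ℕ} (σ : Equiv.Perm (Fin n)) (i c : Fin n) : Finset (Fin n) :=
  ({σ.symm c} ∪ (diagQueens σ i c ∪ antidiagQueens σ i c)).erase i

/-- On average over the `n ^ 2` cells, the two diagonals through a cell together carry at least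
`5 / 4 - o(1)` queens. A queen is counted twice at its own cell, once for each diagonal. -/
theorem le_sum_card_diag {n : ℕ} (σ : Equiv.Perm (Fin n)) :
    5 / 4 * (n : ℝ) ^ 2 - n - 1
      ≤ ∑ i, ∑ c, (((diagQueens σ i c).card : ℝ) + (antidiagQueens σ i c).card) := by
  have e1 : ∑ i, ∑ c, ((diagQueens σ i c).card : ℝ)
      = ∑ r, ((univ.filter (fun q : Fin n × Fin n =>
          (σ r : ℤ) - (q.2 : ℤ) = (r : ℤ) - (q.1 : ℤ))).card : ℝ) := by
    rw [← Fintype.sum_prod_type' (fun i c => ((diagQueens σ i c).card : ℝ))]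
    simp only [diagQueens, card_filter, Nat.cast_sum]
    rw [Finset.sum_comm]
  have e2 : ∑ i, ∑ c, ((antidiagQueens σ i c).card : ℝ)
      = ∑ r, ((univ.filter (fun q : Fin n × Fin n =>
          (σ r : ℤ) - (q.2 : ℤ) = (q.1 : ℤ) - (r : ℤ))).card : ℝ) := by
    rw [← Fintype.sum_prod_type' (fun i c => ((antidiagQueens σ i c).card : ℝ))]
    simp only [antidiagQueens, card_filter, Nat.cast_sum]
    rw [Finset.sum_comm]
  simp only [Finset.sum_add_distrib]
  rw [e1, e2, ← Finset.sum_add_distrib]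
  have h : ∀ r ∈ (univ : Finset (Fin n)),
      2 * (n : ℝ) - (n / 2 + (excess n (r : ℕ) + excess n (σ r : ℕ)))
      ≤ ((univ.filter (fun q : Fin n × Fin n =>
          (σ r : ℤ) - (q.2 : ℤ) = (r : ℤ) - (q.1 : ℤ))).card : ℝ)
        + ((univ.filter (fun q : Fin n × Fin n =>
          (σ r : ℤ) - (q.2 : ℤ) = (q.1 : ℤ) - (r : ℤ))).card : ℝ) := by
    intro r _
    have h1 := le_sum_diag r (σ r)
    have h2 := le_sum_antidiag r (σ r)
    have h3 := abs_add_abs_le_excess n (r : ℕ) (σ r : ℕ)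
    linarith
  refine le_trans ?_ (Finset.sum_le_sum h)
  rw [Finset.sum_sub_distrib, Finset.sum_add_distrib, Finset.sum_add_distrib,
    Equiv.sum_comp σ (fun r : Fin n => excess n (r : ℕ))]
  have := sum_excess_le n
  simp only [Finset.sum_const, card_univ, Fintype.card_fin, nsmul_eq_mul]
  linarith

/-- A cell without a queen has `1 + d` attackers, where `d ∈ {0, 1, 2}` counts its occupied diagonals,
and `x ^ d ≤ 1 - (1 - x ^ 2) / 2 * d` by convexity in `d`.
The indicator covers the cells with a queen, which have no attackers. -/
theorem pow_card_attackers_le {n : ℕ} {σ : Equiv.Perm (Fin n)} (hσ : IsQueens n σ) (i c : Fin n)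
    {x : ℝ} (hx0 : 0 ≤ x) (hx1 : x ≤ 1) :
    x ^ (attackers σ i c).card ≤ (if c = σ i then 1 else 0)
      + x * (1 - (1 - x ^ 2) / 2 * (((diagQueens σ i c).card : ℝ) + (antidiagQueens σ i c).card)) := by
  have hd1 : (diagQueens σ i c).card ≤ 1 := by
    refine Finset.card_le_one.2 fun r hr s hs => ?_
    simp only [diagQueens, mem_filter, mem_univ, true_and] at hr hs
    by_contra hne
    exact (hσ r s hne).1 (by linarith)
  have hd2 : (antidiagQueens σ i c).card ≤ 1 := by
    refine Finset.card_le_one.2 fun r hr s hs => ?_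
    simp only [antidiagQueens, mem_filter, mem_univ, true_and] at hr hs
    by_contra hne
    exact (hσ r s hne).2 (by linarith)
  have hx2 : x ^ 2 ≤ 1 := pow_le_one₀ hx0 hx1
  by_cases hc : c = σ i
  · rw [if_pos hc]
    have h1 : x ^ (attackers σ i c).card ≤ 1 := pow_le_one₀ hx0 hx1
    have hd1' : ((diagQueens σ i c).card : ℝ) ≤ 1 := by exact_mod_cast hd1
    have hd2' : ((antidiagQueens σ i c).card : ℝ) ≤ 1 := by exact_mod_cast hd2
    have : 0 ≤ 1 - (1 - x ^ 2) / 2 *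
        (((diagQueens σ i c).card : ℝ) + (antidiagQueens σ i c).card) := by nlinarith
    have := mul_nonneg hx0 this
    linarith
  · rw [if_neg hc, zero_add]
    have hcard : (attackers σ i c).card
        = 1 + ((diagQueens σ i c).card + (antidiagQueens σ i c).card) := by
      have hne : ∀ r, r = i → (σ r : ℤ) ≠ c := by
        rintro r rfl h
        exact hc (Fin.ext (by exact_mod_cast h.symm))
      have hi : i ∉ ({σ.symm c} ∪ (diagQueens σ i c ∪ antidiagQueens σ i c) : Finset (Fin n)) := by
        simp only [mem_union, mem_singleton, diagQueens, antidiagQueens, mem_filter, mem_univ,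
          true_and, not_or]
        refine ⟨fun h => hc (by rw [h]; simp), fun h => hne i rfl (by linarith),
          fun h => hne i rfl (by linarith)⟩
      rw [attackers, erase_eq_of_notMem hi, card_union_of_disjoint, card_union_of_disjoint,
        card_singleton]
      · rw [Finset.disjoint_left]
        intro r h1 h2
        simp only [diagQueens, antidiagQueens, mem_filter, mem_univ, true_and] at h1 h2
        exact hne r (Fin.ext (by omega)) (by linarith)
      · rw [Finset.disjoint_singleton_left]
        simp only [mem_union, diagQueens, antidiagQueens, mem_filter, mem_univ, true_and,
          Equiv.apply_symm_apply, not_or]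
        constructor
        · intro h
          exact hne (σ.symm c) (Fin.ext (by omega)) (by simp)
        · intro h
          exact hne (σ.symm c) (Fin.ext (by omega)) (by simp)
    rw [hcard, pow_add, pow_one]
    refine mul_le_mul_of_nonneg_left ?_ hx0
    interval_cases (diagQueens σ i c).card <;> interval_cases (antidiagQueens σ i c).card <;>
      norm_num <;> nlinarith [sq_nonneg (x - 1)]

/-- An upper bound for the average number of columns available at position `k` of a random order. The
summand `8` absorbs the lower-order terms. -/
noncomputable def stepBound (n k : ℕ) : ℝ := ((n : ℝ) - k + 8) * hfun (((n : ℝ) - k) / n)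

/-- The case `d = 5 / 4` on average, `1 - (1 - x ^ 2) / 2 * (5 / 4)` being `hfun x`. -/
theorem sum_pow_attackers_le {n : ℕ} (hn : 2 ≤ n) {σ : Equiv.Perm (Fin n)} (hσ : IsQueens n σ)
    (k : Fin n) :
    ∑ i, ∑ c, (((n - 1 - k : ℕ) : ℝ) / ((n - 1 : ℕ) : ℝ)) ^ (attackers σ i c).card
      ≤ n * stepBound n k := by
  have hk := k.isLt
  have hn2 : (2 : ℝ) ≤ n := by exact_mod_cast hn
  have hk1 : ((k : ℕ) : ℝ) + 1 ≤ n := by exact_mod_cast hk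
  have hk0 : (0 : ℝ) ≤ ((k : ℕ) : ℝ) := Nat.cast_nonneg _
  have ea : ((n - 1 - k : ℕ) : ℝ) = n - 1 - (k : ℕ) := by
    rw [Nat.sub_sub, Nat.cast_sub (by omega)]; push_cast; ring
  have eb : ((n - 1 : ℕ) : ℝ) = n - 1 := by rw [Nat.cast_sub (by omega)]; simp
  rw [ea, eb]
  set x : ℝ := ((n : ℝ) - 1 - (k : ℕ)) / (n - 1) with hx
  have hx0 : 0 ≤ x := div_nonneg (by linarith) (by linarith)
  have hx1 : x ≤ 1 := div_le_one_of_le₀ (by linarith) (by linarith)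
  have hxe : x * (n - 1) = n - 1 - (k : ℕ) := div_mul_cancel₀ _ (by linarith)
  have hsum := Finset.sum_le_sum fun i (_ : i ∈ univ) => Finset.sum_le_sum
    fun c (_ : c ∈ univ) => pow_card_attackers_le hσ i c hx0 hx1
  refine hsum.trans ?_
  have hD := le_sum_card_diag σ
  simp only [Finset.sum_add_distrib, ← Finset.mul_sum, Finset.sum_sub_distrib] at hD ⊢
  simp only [Finset.sum_ite_eq', mem_univ, if_true, Finset.sum_const, card_univ, Fintype.card_fin,
    nsmul_eq_mul, mul_one]
  set D := ∑ i, ∑ c, ((diagQueens σ i c).card : ℝ) + ∑ i, ∑ c, ((antidiagQueens σ i c).card : ℝ)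
  have hq : 0 ≤ x * (1 - x ^ 2) / 2 := by
    have : x ^ 2 ≤ 1 := pow_le_one₀ hx0 hx1
    have : 0 ≤ x * (1 - x ^ 2) := mul_nonneg hx0 (by linarith)
    linarith
  have hq1 : x * (1 - x ^ 2) / 2 ≤ 1 / 2 := by nlinarith [sq_nonneg x, mul_nonneg hx0 (sq_nonneg x)]
  have hmono : hfun x ≤ hfun (((n : ℝ) - (k : ℕ)) / n) := by
    have : x ≤ ((n : ℝ) - (k : ℕ)) / n := by
      rw [le_div_iff₀ (by linarith)]; nlinarith
    unfold hfun
    gcongr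
  have h1 : (n : ℝ) + x * (n * n - (1 - x ^ 2) / 2 * D)
      ≤ n * ((n * x + 8) * hfun x) := by
    have h2 := mul_le_mul_of_nonneg_left hD hq
    have h3 : x * (1 - x ^ 2) / 2 * ((n : ℝ) + 1) ≤ 1 / 2 * (n + 1) := by gcongr
    have h4 : (n : ℝ) * 3 ≤ n * (8 * hfun x) := by
      gcongr; unfold hfun; nlinarith [sq_nonneg x]
    have h5 : (n : ℝ) * (n * x * hfun x) = x * n * n - x * (1 - x ^ 2) / 2 * (5 / 4 * n ^ 2) := by
      unfold hfun; ring
    nlinarith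
  refine h1.trans ?_
  unfold stepBound
  have h6 : (n : ℝ) * x ≤ n - (k : ℕ) := by nlinarith
  have := (hfun_pos x).le
  gcongr
  linarith

/-! ### Assembling the bound -/

/-- The `n`-queens configurations as a finset. -/
noncomputable def queens (n : ℕ) : Finset (Equiv.Perm (Fin n)) :=
  open scoped Classical in univ.filter (IsQueens n)

theorem mem_queens {n : ℕ} {σ : Equiv.Perm (Fin n)} : σ ∈ queens n ↔ IsQueens n σ := by
  simp [queens]

theorem Q_eq_card (n : ℕ) : Q n = (queens n).card := by
  classical
  rw [Q, Nat.card_eq_fintype_card, Fintype.card_subtype, queens]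

/-- When the rows are read in the order `p` (row `r` at position `p r`): the number of columns for the
row at position `k` that occur in some configuration agreeing with `σ` on all earlier rows. -/
noncomputable def choices {n : ℕ} (σ p : Equiv.Perm (Fin n)) (k : Fin n) : ℕ :=
  extCount ((queens n).image (fun τ : Equiv.Perm (Fin n) => (⇑τ ∘ ⇑p.symm : Fin n → Fin n))) (σ ∘ p.symm) k

theorem sum_prod_inv_choices_le_one {n : ℕ} (p : Equiv.Perm (Fin n)) :
    ∑ σ ∈ queens n, ∏ k, ((choices σ p k : ℝ))⁻¹ ≤ 1 := by
  have h := sum_prod_inv_extCount_le_one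
    ((queens n).image (fun τ : Equiv.Perm (Fin n) => (⇑τ ∘ ⇑p.symm : Fin n → Fin n)))
  rw [Finset.sum_image] at h
  · exact h
  · intro σ _ τ _ hστ
    ext i
    have := congrFun hστ (p i)
    simp only [Function.comp_apply, Equiv.symm_apply_apply] at this
    rw [this]

theorem choices_pos {n : ℕ} {σ : Equiv.Perm (Fin n)} (hσ : σ ∈ queens n) (p : Equiv.Perm (Fin n))
    (k : Fin n) : 0 < choices σ p k := by
  unfold choices extCount
  refine Finset.card_pos.2 ⟨(σ ∘ p.symm) k, mem_image.2 ⟨σ ∘ p.symm, ?_, rfl⟩⟩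
  exact mem_filter.2 ⟨mem_image_of_mem (fun τ : Equiv.Perm (Fin n) => (⇑τ ∘ ⇑p.symm)) hσ,
    fun _ _ => rfl⟩

/-- A column attacked by a queen read earlier occurs in no configuration that agrees with `σ` so far. -/
theorem choices_le {n : ℕ} (σ p : Equiv.Perm (Fin n)) (k : Fin n) :
    choices σ p k
      ≤ (univ.filter (fun c => ∀ r ∈ attackers σ (p.symm k) c, k < p r)).card := by
  refine Finset.card_le_card ?_
  intro c hc
  simp only [mem_image, mem_filter, mem_univ, true_and] at hc ⊢
  obtain ⟨_, ⟨⟨τ, hτ, rfl⟩, hagree⟩, rfl⟩ := hc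
  intro r hr
  rw [attackers, mem_erase] at hr
  obtain ⟨hne, hr⟩ := hr
  by_contra hlt
  have hlt' : p r < k := lt_of_le_of_ne (not_lt.1 hlt) (fun h => hne (by rw [← h]; simp))
  have hσr : τ r = σ r := by simpa using hagree (p r) hlt'
  have hq := mem_queens.1 hτ r (p.symm k) hne
  simp only [Function.comp_apply, mem_union, mem_singleton, diagQueens, antidiagQueens, mem_filter,
    mem_univ, true_and, ← hσr] at hr
  rcases hr with h | h | h
  · rw [Equiv.eq_symm_apply, ← hσr] at h
    exact hne (τ.injective h)
  · exact hq.1 h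
  · exact hq.2 h

/-- The average of `choices σ p k` over all orders `p` is at most `stepBound n k`. -/
theorem sum_choices_le {n : ℕ} (hn : 2 ≤ n) {σ : Equiv.Perm (Fin n)} (hσ : IsQueens n σ)
    (k : Fin n) :
    ∑ p, (choices σ p k : ℝ) ≤ n.factorial * stepBound n k := by
  have hn0 : (0 : ℝ) < n := by positivity
  have h1 : ∑ p, choices σ p k ≤ ∑ i, ∑ c, (laterPerms k i (attackers σ i c)).card := by
    refine (Finset.sum_le_sum fun p _ => choices_le σ p k).trans (le_of_eq ?_)
    simp only [laterPerms, card_filter]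
    have : ∀ p : Equiv.Perm (Fin n),
        (∑ c, if ∀ r ∈ attackers σ (p.symm k) c, k < p r then 1 else 0)
          = ∑ i, ∑ c, if p i = k ∧ ∀ r ∈ attackers σ i c, k < p r then 1 else 0 := by
      intro p
      symm
      rw [Finset.sum_eq_single_of_mem (p.symm k) (mem_univ _)]
      · simp
      · intro i _ hi
        have : p i ≠ k := fun h => hi (by rw [← h]; simp)
        simp [this]
    rw [Finset.sum_congr rfl fun p _ => this p, Finset.sum_comm]
    exact Finset.sum_congr rfl fun i _ => Finset.sum_comm
  have h2 : (∑ i, ∑ c, ((laterPerms k i (attackers σ i c)).card : ℝ)) * n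
      ≤ n.factorial * (n * stepBound n k) := by
    refine le_trans ?_ (mul_le_mul_of_nonneg_left (sum_pow_attackers_le hn hσ k) (by positivity))
    simp only [Finset.sum_mul, Finset.mul_sum]
    exact Finset.sum_le_sum fun i _ => Finset.sum_le_sum fun c _ =>
      card_laterPerms_le hn k i _ (notMem_erase _ _)
  have h1' : ∑ p, (choices σ p k : ℝ)
      ≤ ∑ i, ∑ c, ((laterPerms k i (attackers σ i c)).card : ℝ) := by exact_mod_cast h1
  refine h1'.trans (le_of_mul_le_mul_right ?_ hn0)
  linarith

theorem stepBound_pos {n : ℕ} (k : Fin n) : 0 < stepBound n k := by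
  have : ((k : ℕ) : ℝ) ≤ n := by exact_mod_cast k.isLt.le
  exact mul_pos (by linarith) (hfun_pos _)

/-- For each configuration `σ`, the product of `stepBound n k / choices σ p k` over `k` averages to at
least `1` over the orders `p`; for each `p`, the reciprocals of the products of the `choices σ p k`
add up to at most `1` over `σ`. -/
theorem card_queens_le {n : ℕ} (hn : 2 ≤ n) :
    ((queens n).card : ℝ) ≤ ∏ k : Fin n, stepBound n k := by
  have hf : (0 : ℝ) < n.factorial := by exact_mod_cast n.factorial_pos
  have hcard : ((univ : Finset (Equiv.Perm (Fin n))).card : ℝ) = n.factorial := by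
    rw [card_univ, Fintype.card_perm, Fintype.card_fin]
  have h1 : ∀ σ ∈ queens n,
      (n.factorial : ℝ) ≤ ∑ p, ∏ k : Fin n, (stepBound n k * ((choices σ p k : ℝ))⁻¹) := by
    intro σ hσ
    have hpos : ∀ p k, (0 : ℝ) < choices σ p k := fun p k => by exact_mod_cast choices_pos hσ p k
    refine le_trans ?_ (Finset.sum_le_sum fun p _ => one_add_sum_le_prod univ
      (fun k : Fin n => stepBound n k * ((choices σ p k : ℝ))⁻¹)
      fun k _ => mul_pos (stepBound_pos k) (inv_pos.2 (hpos p k)))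
    rw [Finset.sum_add_distrib, Finset.sum_comm]
    have h0 : 0 ≤ ∑ k : Fin n, ∑ p, (1 - (stepBound n k * ((choices σ p k : ℝ))⁻¹)⁻¹) := by
      refine Finset.sum_nonneg fun k _ => ?_
      rw [Finset.sum_sub_distrib]
      simp only [mul_inv, inv_inv, ← Finset.mul_sum, Finset.sum_const, nsmul_eq_mul, mul_one]
      rw [hcard, sub_nonneg, inv_mul_le_iff₀ (stepBound_pos k), mul_comm]
      exact sum_choices_le hn (mem_queens.1 hσ) k
    simp only [Finset.sum_const, nsmul_eq_mul, mul_one] at h0 ⊢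
    rw [hcard]
    linarith
  have h2 := Finset.sum_le_sum h1
  rw [Finset.sum_comm, Finset.sum_const, nsmul_eq_mul] at h2
  simp only [Finset.prod_mul_distrib, ← Finset.mul_sum] at h2
  have h3 : ∑ p : Equiv.Perm (Fin n), ∑ σ ∈ queens n, ∏ k, ((choices σ p k : ℝ))⁻¹
      ≤ n.factorial := by
    refine (Finset.sum_le_sum fun p _ => sum_prod_inv_choices_le_one p).trans ?_
    rw [Finset.sum_const, nsmul_eq_mul, mul_one, hcard]
  have hP : 0 ≤ ∏ k : Fin n, stepBound n k := Finset.prod_nonneg fun k _ => (stepBound_pos k).le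
  exact le_of_mul_le_mul_right (h2.trans (mul_le_mul_of_nonneg_left h3 hP)) hf

theorem prod_stepBound_eq {n : ℕ} :
    ∏ k : Fin n, stepBound n k
      = (∏ j ∈ range n, ((j : ℝ) + 9)) * ∏ j ∈ range n, hfun (((j : ℝ) + 1) / n) := by
  rw [Fin.prod_univ_eq_prod_range (fun k => stepBound n k) n, ← Finset.prod_mul_distrib,
    ← Finset.prod_range_reflect]
  refine Finset.prod_congr rfl fun j hj => ?_
  have : j + 1 ≤ n := mem_range.1 hj
  have h : ((n - 1 - j : ℕ) : ℝ) = n - 1 - j := by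
    rw [Nat.sub_sub, Nat.cast_sub (by omega)]; push_cast; ring
  rw [stepBound, h]
  congr 1
  · ring
  · congr 2; ring

theorem queens_upper_bound :
    ∀ ε : ℝ, 0 < ε → ∃ N : ℕ, ∀ n : ℕ, N ≤ n →
      (Q n : ℝ) ≤
        ((1 + ε) * n /
          Real.exp (3 - 2 * Real.sqrt (3 / 5) * Real.arctan (Real.sqrt (5 / 3)))) ^ n := by
  intro ε hε
  obtain ⟨N, hN⟩ := eventually_poly_le ε hε
  refine ⟨max N 2, fun n hn => ?_⟩
  have hn2 : 2 ≤ n := le_trans (le_max_right _ _) hn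
  have hpoly := hN n (le_trans (le_max_left _ _) hn)
  have hF : Real.exp (Ffun 1) / Real.exp 1
      = (Real.exp (3 - 2 * Real.sqrt (3 / 5) * Real.arctan (Real.sqrt (5 / 3))))⁻¹ := by
    rw [← Real.exp_sub, ← Real.exp_neg]
    congr 1
    norm_num [Ffun, hfun]
    ring
  rw [Q_eq_card]
  calc ((queens n).card : ℝ)
      ≤ (∏ j ∈ range n, ((j : ℝ) + 9)) * ∏ j ∈ range n, hfun (((j : ℝ) + 1) / n) :=
        (card_queens_le hn2).trans_eq prod_stepBound_eq
    _ ≤ (((n : ℝ) + 8) ^ 8 * (Real.exp 1 * n * (n / Real.exp 1) ^ n))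
          * (8 / 3 * Real.exp (Ffun 1) ^ n) := by
        have h1 := prod_add_nine_le n
        have h2 := factorial_le_exp (n := n) (by omega)
        have h3 := prod_hfun_le (n := n) (by omega)
        have h4 : 0 ≤ ∏ j ∈ range n, hfun (((j : ℝ) + 1) / n) :=
          Finset.prod_nonneg fun j _ => (hfun_pos _).le
        exact mul_le_mul (h1.trans (by gcongr)) h3 h4 (by positivity)
    _ = (((n : ℝ) + 8) ^ 8 * (Real.exp 1 * n) * (8 / 3))
          * (n * (Real.exp (Ffun 1) / Real.exp 1)) ^ n := by
        rw [mul_pow, div_pow, div_pow]; ring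
    _ ≤ (1 + ε) ^ n * (n * (Real.exp (Ffun 1) / Real.exp 1)) ^ n := by gcongr
    _ = _ := by rw [hF, ← mul_pow, div_eq_mul_inv ((1 + ε) * (n : ℝ)), mul_assoc (1 + ε)]
end
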